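/- arXiv:2505.14322 — 2 statements merged into one kernel-verified Lean document; each statement's English description precedes it below -/
import Mathlib

section
/- Let J ⊆ [n] be nonempty, let A be the real adjacency matrix of the opposition graph Γ_J (vertices are the flags of type J, two flags adjacent if and only if they are opposite), and let λ_J denote the smallest eigenvalue of A. If 𝓕 is a ratio-sharp EKR-set of flags of type J, then for every flag F of type J one has (−λ_J)·𝟙_𝓕(F) + #{G ∈ 𝓕 : G is opposite to F} = −λ_J, where 𝟙_𝓕(F) = 1 if F ∈ 𝓕 and 0 otherwise; in particular, for every flag F ∉ 𝓕 exactly −λ_J members of 𝓕 are opposite to F. -/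
open scoped Classical

open Module

section Defs

variable {F V : Type} [Field F] [AddCommGroup V] [Module F V]

/-- The orthogonal complement of a subspace with respect to a bilinear form. -/
def bperp (B : V →ₗ[F] V →ₗ[F] F) (W : Submodule F V) : Submodule F V :=
  ⨅ w ∈ W, LinearMap.ker (B w)

/-- A subspace is totally isotropic for `B`. -/
def IsTotIso (B : V →ₗ[F] V →ₗ[F] F) (W : Submodule F V) : Prop :=
  ∀ u ∈ W, ∀ w ∈ W, B u w = 0

/-- `B` is an alternating form. -/
def IsAltForm (B : V →ₗ[F] V →ₗ[F] F) : Prop := ∀ v, B v v = 0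

/-- `B` is nondegenerate. -/
def NondegForm (B : V →ₗ[F] V →ₗ[F] F) : Prop := ∀ v, (∀ w, B v w = 0) → v = 0

/-- A flag of type `J` of totally isotropic subspaces: entries outside `J` are `⊥`. -/
structure SFlag (B : V →ₗ[F] V →ₗ[F] F) (J : Finset ℕ) where
  space : ℕ → Submodule F V
  isotropic : ∀ i ∈ J, IsTotIso B (space i)
  finrank_eq : ∀ i ∈ J, Module.finrank F (space i) = i
  mono : ∀ i ∈ J, ∀ j ∈ J, i ≤ j → space i ≤ space j
  eq_bot : ∀ i, i ∉ J → space i = ⊥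

/-- Two flags of type `J` are opposite. -/
def FlagOpp {B : V →ₗ[F] V →ₗ[F] F} {J : Finset ℕ} (C C' : SFlag B J) : Prop :=
  ∀ i ∈ J, bperp B (C.space i) ⊓ C'.space i = ⊥

/-- An EKR-set of flags of type `J`: no two members are opposite. -/
def IsEKRFlags {B : V →ₗ[F] V →ₗ[F] F} {J : Finset ℕ} (𝓕 : Set (SFlag B J)) : Prop :=
  ∀ C ∈ 𝓕, ∀ C' ∈ 𝓕, ¬ FlagOpp C C'

/-- Two subspaces are opposite. -/
def SpaceOpp (B : V →ₗ[F] V →ₗ[F] F) (S T : Submodule F V) : Prop :=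
  bperp B S ⊓ T = ⊥

/-- An EKR-set of totally isotropic `s`-spaces: no two members are opposite. -/
def IsEKRSpaces (B : V →ₗ[F] V →ₗ[F] F) (s : ℕ) (𝓕 : Set (Submodule F V)) : Prop :=
  (∀ S ∈ 𝓕, IsTotIso B S ∧ Module.finrank F S = s) ∧
    ∀ S ∈ 𝓕, ∀ T ∈ 𝓕, ¬ SpaceOpp B S T

/-- An `s`-space `S` is heavy with respect to a set `𝓕` of flags: every flag whose
`s`-th entry equals `S` belongs to `𝓕`. -/
def Heavy {B : V →ₗ[F] V →ₗ[F] F} {J : Finset ℕ} (𝓕 : Set (SFlag B J)) (s : ℕ)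
    (S : Submodule F V) : Prop :=
  ∀ C : SFlag B J, C.space s = S → C ∈ 𝓕

end Defs

/-- `z_k = ∏_{i=1}^k (q^i-1)/(q-1)`. -/
noncomputable def zpol (q k : ℕ) : ℝ :=
  ∏ i ∈ Finset.Icc 1 k, ((q : ℝ) ^ i - 1) / ((q : ℝ) - 1)

/-- The Gaussian binomial coefficient `[m choose k]_q` as a real number. -/
noncomputable def gaussq (q m k : ℕ) : ℝ :=
  ∏ i ∈ Finset.Icc 1 k, ((q : ℝ) ^ (m - k + i) - 1) / ((q : ℝ) ^ i - 1)

/-- `Φ_m^s` in `PS(n,1,q)`: the number of totally isotropic `s`-spaces containing a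
fixed totally isotropic `m`-space. -/
noncomputable def PhiP (q n m s : ℕ) : ℝ :=
  gaussq q (n - m) (s - m) * ∏ i ∈ Finset.Icc 1 (s - m), ((q : ℝ) ^ (n - m + 1 - i) + 1)

/-!
The opposition matrix `A` of the chambers is the `n`-th power of `c = T₁ ⋯ Tₙ`, where `Tᵢ` is the
adjacency matrix of the chambers that differ in the entry of dimension `i`: the `n`-th power of a
Coxeter element of the Weyl group is the longest element, and lengths add. Each `Tᵢ` has eigenvalues
`q` and `-1` only and commutes with `A`. On an eigenspace of `A` for an eigenvalue other than
`q ^ n ^ 2` the `Tᵢ` have no common `q`-eigenvector, so their `q`-eigenspaces have codimensions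
adding up to at least the dimension `d` of the eigenspace. Hence the restriction of `c` has
determinant at most `q ^ ((n - 1) * d)` in absolute value, and the eigenvalues of `A` are at least
`-q ^ n ^ 2 / q ^ n`, the valency being `q ^ n ^ 2`.

The ratio `-1 / q ^ n` of least eigenvalue bound to valency is inherited by flags of type `J`, since
forgetting the entry of one dimension maps opposition graphs onto each other with constant fibres
over the neighbours. It follows that a ratio-sharp EKR-set attains Hoffman's bound; its indicator
vector is then a constant plus an eigenvector for the least eigenvalue, which is the assertion.
-/

open Matrix

section CoxeterProd

variable {R W : Type*} [CommRing R] [AddCommGroup W] [Module R W]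

/-- The product `T 0 * T 1 * ⋯ * T (n - 1)`: a Coxeter element when the `T i` are the simple
generators of a Hecke algebra. -/
def coxeterProd {M : Type*} [Monoid M] (T : ℕ → M) (n : ℕ) : M :=
  ((List.range n).map T).prod

theorem coxeterProd_zero {M : Type*} [Monoid M] (T : ℕ → M) : coxeterProd T 0 = 1 := rfl

theorem coxeterProd_succ {M : Type*} [Monoid M] (T : ℕ → M) (n : ℕ) :
    coxeterProd T (n + 1) = coxeterProd T n * T n :=
  List.prod_range_succ T n

theorem map_coxeterProd {M N : Type*} [Monoid M] [CommMonoid N] (f : M →* N) (T : ℕ → M) (n : ℕ) :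
    f (coxeterProd T n) = ∏ i ∈ Finset.range n, f (T i) := by
  rw [coxeterProd, map_list_prod, List.map_map]
  rfl

theorem coxeterProd_apply_of_eigenvector {T : ℕ → End R W} {q : R} {n : ℕ} {v : W}
    (hv : ∀ i < n, T i v = q • v) : coxeterProd T n v = q ^ n • v := by
  induction n with
  | zero => simp [coxeterProd_zero]
  | succ n ih =>
    rw [coxeterProd_succ, Module.End.mul_apply, hv n n.lt_succ_self, map_smul,
      ih fun i hi => hv i (hi.trans n.lt_succ_self), smul_smul, ← pow_succ']

theorem pow_apply_of_eigenvector {f : End R W} {a : R} {v : W} (hv : f v = a • v) (m : ℕ) :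
    (f ^ m) v = a ^ m • v := by
  induction m with
  | zero => simp
  | succ m ih => rw [pow_succ, Module.End.mul_apply, hv, map_smul, ih, smul_smul, ← pow_succ']

theorem coe_coxeterProd_restrict {W₀ : Submodule R W} {T : ℕ → End R W}
    (hT : ∀ i, ∀ v ∈ W₀, T i v ∈ W₀) (n : ℕ) (v : W₀) :
    (coxeterProd (fun i => (T i).restrict (hT i)) n v : W) = coxeterProd T n v := by
  induction n generalizing v with
  | zero => rfl
  | succ n ih => rw [coxeterProd_succ, coxeterProd_succ, Module.End.mul_apply, ih]; rfl

end CoxeterProd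

section Eigenvalue

theorem sum_finrank_add_finrank_le {K ι : Type*} [Field K] {V : Type*} [AddCommGroup V]
    [Module K V] [FiniteDimensional K V] (s : Finset ι) (p : ι → Submodule K V) :
    ∑ i ∈ s, finrank K (p i) + finrank K V ≤ s.card * finrank K V + finrank K ↥(s.inf p) := by
  induction s using Finset.induction_on with
  | empty => rw [Finset.inf_empty, finrank_top, Finset.sum_empty, zero_add]; exact le_add_self
  | insert i s hi ih =>
    have hdim := Submodule.finrank_sup_add_finrank_inf_eq (p i) (s.inf p)
    have hsup := Submodule.finrank_le (p i ⊔ s.inf p)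
    rw [Finset.sum_insert hi, Finset.card_insert_of_notMem hi, Finset.inf_insert, add_mul]
    omega

variable {W : Type*} [AddCommGroup W] [Module ℝ W] [FiniteDimensional ℝ W]

theorem abs_det_of_sub_mul_add_eq_zero {q : ℝ} (hq : 0 ≤ q) {T : End ℝ W}
    (hT : (T - q • 1) * (T + 1) = 0) : |T.det| = q ^ finrank ℝ (T.eigenspace q) := by
  have hmaps : T.eigenspace q ≤ (T.eigenspace q).comap T := fun v hv => by
    have hv' := End.mem_eigenspace_iff.1 hv
    rw [Submodule.mem_comap, hv']
    exact Submodule.smul_mem _ _ hv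
  have hrestrict : T.restrict hmaps = q • LinearMap.id :=
    LinearMap.ext fun v => Subtype.ext (End.mem_eigenspace_iff.1 v.2)
  have hquotient : (T.eigenspace q).mapQ _ T hmaps = (-1 : ℝ) • LinearMap.id := by
    refine Submodule.linearMap_qext _ (LinearMap.ext fun v => ?_)
    have hmem : T v + v ∈ T.eigenspace q :=
      End.mem_eigenspace_iff.2 (sub_eq_zero.1 (LinearMap.congr_fun hT v))
    simpa [add_eq_zero_iff_eq_neg] using (Submodule.Quotient.mk_eq_zero _).2 hmem
  rw [LinearMap.det_eq_det_mul_det _ T hmaps, hrestrict, hquotient, LinearMap.det_smul,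
    LinearMap.det_smul, LinearMap.det_id, LinearMap.det_id, mul_one, mul_one, abs_mul, abs_pow,
    abs_pow, abs_neg, abs_one, one_pow, mul_one, abs_of_nonneg hq]

-- Without a common `q`-eigenvector the codimensions of the `q`-eigenspaces add up to at least
-- `dim W`, which bounds the determinant of `coxeterProd T n`.
theorem abs_le_of_coxeterProd_pow_eq_smul [Nontrivial W] {T : ℕ → End ℝ W} {q lam : ℝ} (hq : 1 ≤ q)
    {n m : ℕ} (hT : ∀ i < n, (T i - q • 1) * (T i + 1) = 0)
    (hpow : coxeterProd T n ^ m = lam • 1) (hlam : lam ≠ q ^ (n * m)) :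
    |lam| ≤ q ^ ((n - 1) * m) := by
  have hinf : (Finset.range n).inf (fun i => (T i).eigenspace q) = ⊥ := by
    refine (Submodule.eq_bot_iff _).2 fun v hv => ?_
    have hTv : ∀ i < n, T i v = q • v := fun i hi =>
      End.mem_eigenspace_iff.1
        (Finset.inf_le (f := fun i => (T i).eigenspace q) (Finset.mem_range.2 hi) hv)
    have hv' := pow_apply_of_eigenvector (coxeterProd_apply_of_eigenvector hTv) m
    rw [hpow, LinearMap.smul_apply, End.one_apply, ← pow_mul, ← sub_eq_zero, ← sub_smul] at hv'
    exact (smul_eq_zero.1 hv').resolve_left (sub_ne_zero.2 hlam)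
  have hdet : |lam| ^ finrank ℝ W
      = q ^ ((∑ i ∈ Finset.range n, finrank ℝ ((T i).eigenspace q)) * m) := by
    have h := congrArg (fun f => |LinearMap.det f|) hpow
    rw [map_pow, LinearMap.det_smul, map_one, mul_one, abs_pow, abs_pow,
      map_coxeterProd LinearMap.det T n, Finset.abs_prod] at h
    rw [← h, pow_mul, ← Finset.prod_pow_eq_pow_sum]
    exact congrArg (· ^ m) (Finset.prod_congr rfl fun i hi =>
      (abs_det_of_sub_mul_add_eq_zero (by linarith) (hT i (Finset.mem_range.1 hi))))
  have hsum := sum_finrank_add_finrank_le (Finset.range n) fun i => (T i).eigenspace q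
  rw [hinf, finrank_bot, add_zero, Finset.card_range] at hsum
  refine le_of_pow_le_pow_left₀ finrank_pos.ne' (by positivity) (hdet.trans_le ?_)
  rw [← pow_mul, mul_right_comm]
  refine pow_le_pow_right₀ hq (Nat.mul_le_mul_right m ?_)
  rw [Nat.sub_mul, one_mul]
  omega

theorem eq_or_abs_le_of_hasEigenvalue_coxeterProd_pow {T : ℕ → End ℝ W} {q lam : ℝ} (hq : 1 ≤ q)
    {n m : ℕ} (hT : ∀ i < n, (T i - q • 1) * (T i + 1) = 0)
    (hcomm : ∀ i, Commute (coxeterProd T n ^ m) (T i))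
    (hlam : End.HasEigenvalue (coxeterProd T n ^ m) lam) :
    lam = q ^ (n * m) ∨ |lam| ≤ q ^ ((n - 1) * m) := by
  set A := coxeterProd T n ^ m with hA
  have hmaps : ∀ i, ∀ v ∈ A.eigenspace lam, T i v ∈ A.eigenspace lam := fun i v hv => by
    rw [End.mem_eigenspace_iff] at hv ⊢
    rw [← Module.End.mul_apply, hcomm i, Module.End.mul_apply, hv, map_smul]
  have : Nontrivial (A.eigenspace lam) := Submodule.nontrivial_iff_ne_bot.2 hlam
  refine or_iff_not_imp_left.2 fun hne =>
    abs_le_of_coxeterProd_pow_eq_smul (T := fun i => (T i).restrict (hmaps i)) hq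
      (fun i hi => LinearMap.ext fun v => Subtype.ext ?_)
      (LinearMap.ext fun v => Subtype.ext ?_) hne
  · exact LinearMap.congr_fun (hT i hi) v
  · have hiter : ∀ k, ((coxeterProd (fun i => (T i).restrict (hmaps i)) n ^ k) v : W)
        = (coxeterProd T n ^ k) v := fun k => by
      induction k with
      | zero => rfl
      | succ k ih =>
        rw [pow_succ', Module.End.mul_apply, coe_coxeterProd_restrict, ih, pow_succ',
          Module.End.mul_apply]
    rw [hiter, ← hA]
    exact End.mem_eigenspace_iff.1 v.2

end Eigenvalue

section RelMat

variable {X Y : Type*}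

/-- The real `0`-`1` matrix of a relation: the adjacency matrix when the relation is symmetric. -/
noncomputable def relMat (r : X → X → Prop) : Matrix X X ℝ :=
  Matrix.of fun a b => if r a b then 1 else 0

theorem relMat_apply (r : X → X → Prop) (a b : X) : relMat r a b = if r a b then 1 else 0 := rfl

theorem relMat_eq : relMat (fun a b : X => a = b) = 1 := by
  ext a b
  rw [relMat_apply, Matrix.one_apply]

theorem transpose_relMat {r : X → X → Prop} (hr : ∀ a b, r a b → r b a) :
    (relMat r)ᵀ = relMat r := by
  ext a b
  rw [Matrix.transpose_apply, relMat_apply, relMat_apply, if_congr ⟨hr b a, hr a b⟩ rfl rfl]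

theorem relMat_ne_add_one {r : X → X → Prop} (hr : ∀ a, r a a) :
    relMat (fun a b => b ≠ a ∧ r a b) + 1 = relMat r := by
  ext a b
  rw [Matrix.add_apply, relMat_apply, relMat_apply, Matrix.one_apply]
  by_cases hab : a = b
  · simp [hab, hr b]
  · simp [hab, Ne.symm hab]

variable [Fintype X] [Fintype Y]

theorem ncard_setOf_eq_card_filter (p : X → Prop) [DecidablePred p] :
    {a | p a}.ncard = (Finset.univ.filter p).card := by
  rw [← Set.ncard_coe_finset, Finset.coe_filter_univ]

theorem relMat_mulVec (r : X → X → Prop) (f : X → ℝ) (a : X) :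
    (relMat r *ᵥ f) a = ∑ b with r a b, f b := by
  simp only [Matrix.mulVec, dotProduct, relMat_apply, ite_mul, one_mul, zero_mul,
    Finset.sum_filter]

theorem relMat_mulVec_one {r : X → X → Prop} {m : ℕ} (hcard : ∀ a, {b | r a b}.ncard = m) :
    relMat r *ᵥ 1 = (m : ℝ) • 1 := by
  ext a
  rw [relMat_mulVec, ← hcard a, ncard_setOf_eq_card_filter]
  simp

theorem relMat_mul_apply (r s : X → X → Prop) (a c : X) :
    (relMat r * relMat s) a c = ({b | r a b ∧ s b c}.ncard : ℝ) := by
  simp only [Matrix.mul_apply, relMat_apply, mul_ite, mul_one, mul_zero, ← ite_and,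
    Finset.sum_boole, ncard_setOf_eq_card_filter, and_comm]

theorem relMat_mul_eq_smul {r s t : X → X → Prop} {m : ℕ}
    (hcomp : ∀ a b c, r a b → s b c → t a c)
    (hmid : ∀ a c, t a c → {b | r a b ∧ s b c}.ncard = m) :
    relMat r * relMat s = (m : ℝ) • relMat t := by
  ext a c
  rw [relMat_mul_apply, Matrix.smul_apply, relMat_apply]
  by_cases hac : t a c
  · rw [if_pos hac, hmid a c hac, smul_eq_mul, mul_one]
  · have hempty : {b | r a b ∧ s b c} = ∅ :=
      Set.eq_empty_of_forall_notMem fun b hb => hac (hcomp a b c hb.1 hb.2)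
    rw [if_neg hac, hempty, Set.ncard_empty, Nat.cast_zero, smul_zero]

theorem relMat_mul {r s t : X → X → Prop} (hcomp : ∀ a b c, r a b → s b c → t a c)
    (hmid : ∀ a c, t a c → ∃! b, r a b ∧ s b c) : relMat r * relMat s = relMat t := by
  rw [relMat_mul_eq_smul (m := 1) hcomp, Nat.cast_one, one_smul]
  intro a c hac
  obtain ⟨b, hb, huniq⟩ := hmid a c hac
  exact Set.ncard_eq_one.2 ⟨b, Set.eq_singleton_iff_unique_mem.2 ⟨hb, huniq⟩⟩

theorem relMat_ne_sub_mul_add_one {r : X → X → Prop} (hr : Equivalence r) {q : ℕ}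
    (hcard : ∀ a, {b | b ≠ a ∧ r a b}.ncard = q) :
    (relMat (fun a b => b ≠ a ∧ r a b) - (q : ℝ) • 1) *
      (relMat (fun a b => b ≠ a ∧ r a b) + 1) = 0 := by
  have hclass : ∀ a, {b | r a b}.ncard = q + 1 := fun a => by
    have hinsert : {b | r a b} = insert a {b | b ≠ a ∧ r a b} := by
      ext b
      by_cases hb : b = a <;> simp [hb, hr.refl a]
    rw [hinsert, Set.ncard_insert_of_notMem fun h => h.1 rfl, hcard]
  have hsq : relMat r * relMat r = ((q + 1 : ℕ) : ℝ) • relMat r :=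
    relMat_mul_eq_smul (fun _ _ _ => hr.trans) fun a c hac => by
      rw [← hclass a]
      congr 1
      ext b
      exact and_iff_left_of_imp fun hab => hr.trans (hr.symm hab) hac
  rw [relMat_ne_add_one hr.refl, eq_sub_of_add_eq (relMat_ne_add_one hr.refl), sub_mul, sub_mul,
    hsq, one_mul, smul_mul_assoc, one_mul, Nat.cast_succ, add_smul, one_smul]
  abel

theorem relMat_mulVec_comp {r : X → X → Prop} {s : Y → Y → Prop} {π : X → Y} {m : ℕ}
    (hrs : ∀ a b, r a b → s (π a) (π b))
    (hfib : ∀ a y, s (π a) y → {b | r a b ∧ π b = y}.ncard = m)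
    (f : Y → ℝ) : relMat r *ᵥ (f ∘ π) = (m : ℝ) • (relMat s *ᵥ f) ∘ π := by
  ext a
  have hmaps : ∀ b ∈ Finset.univ.filter (r a), π b ∈ Finset.univ.filter (s (π a)) := fun b hb =>
    Finset.mem_filter.2 ⟨Finset.mem_univ _, hrs a b (Finset.mem_filter.1 hb).2⟩
  rw [relMat_mulVec, Pi.smul_apply, Function.comp_apply, relMat_mulVec, smul_eq_mul, Finset.mul_sum,
    ← Finset.sum_fiberwise_of_maps_to hmaps]
  refine Finset.sum_congr rfl fun y hy => ?_
  rw [← hfib a y (Finset.mem_filter.1 hy).2, ncard_setOf_eq_card_filter, ← nsmul_eq_mul,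
    ← Finset.sum_const, Finset.filter_filter]
  exact Finset.sum_congr rfl fun b hb => congrArg f (Finset.mem_filter.1 hb).2.2

end RelMat

section RatioBound

variable {X Y : Type*} [Fintype X] [Fintype Y] {A : Matrix X X ℝ} {k Q : ℝ}

/-- `A` has constant row sum `k` and all its eigenvalues are at least `-k / Q`; Hoffman's bound for
a coclique `S` of a `k`-regular graph on `X` is then `|S| ≤ |X| / (Q + 1)`. -/
structure RatioBounded (A : Matrix X X ℝ) (k Q : ℝ) : Prop where
  mulVec_one : A *ᵥ 1 = k • 1
  neg_le_mul : ∀ (mu : ℝ) (x : X → ℝ), x ≠ 0 → A *ᵥ x = mu • x → -k ≤ mu * Q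

theorem RatioBounded.of_comp {A' : Matrix Y Y ℝ} {π : X → Y} (hπ : Function.Surjective π) {m : ℝ}
    (hm : 0 < m) (hcomp : ∀ f : Y → ℝ, A *ᵥ (f ∘ π) = m • (A' *ᵥ f) ∘ π)
    (h : RatioBounded A k Q) : RatioBounded A' (k / m) Q where
  mulVec_one := by
    ext y
    obtain ⟨a, rfl⟩ := hπ y
    have hsum : k * 1 = m * (A' *ᵥ 1) (π a) := congrFun (h.mulVec_one.symm.trans (hcomp 1)) a
    rw [Pi.smul_apply, Pi.one_apply, smul_eq_mul, div_mul_eq_mul_div, hsum,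
      mul_div_cancel_left₀ _ hm.ne']
  neg_le_mul mu x hx hxmu := by
    have hne : x ∘ π ≠ 0 := fun h0 => hx (hπ.injective_comp_right h0)
    have heig : A *ᵥ (x ∘ π) = (m * mu) • (x ∘ π) := by
      rw [hcomp, hxmu, mul_smul]
      rfl
    have hle := h.neg_le_mul _ _ hne heig
    rw [← neg_div, div_le_iff₀ hm]
    linarith

theorem ratioBounded_coxeterProd_pow {T : ℕ → Matrix X X ℝ} {q : ℝ} (hq : 1 ≤ q) {n : ℕ}
    (hrow : ∀ i < n, T i *ᵥ 1 = q • 1) (hT : ∀ i < n, (T i - q • 1) * (T i + 1) = 0)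
    (hcomm : ∀ i, Commute (coxeterProd T n ^ n) (T i)) :
    RatioBounded (coxeterProd T n ^ n) (q ^ (n * n)) (q ^ n) := by
  let L : Matrix X X ℝ →* End ℝ (X → ℝ) := Matrix.toLinAlgEquiv' (R := ℝ) (n := X)
  have hL : coxeterProd (L ∘ T) n ^ n = L (coxeterProd T n ^ n) := by
    rw [map_pow, coxeterProd, coxeterProd, map_list_prod, List.map_map]
  have hquad : ∀ i < n, ((L ∘ T) i - q • 1) * ((L ∘ T) i + 1) = 0 := fun i hi => by
    have h := congrArg (Matrix.toLinAlgEquiv' (R := ℝ) (n := X)) (hT i hi)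
    rwa [map_mul, map_sub, map_smul, map_add, map_one, map_zero] at h
  refine ⟨?_, fun mu x hx hxmu => ?_⟩
  · have hone := coxeterProd_apply_of_eigenvector (T := L ∘ T) (v := 1) hrow
    have h := pow_apply_of_eigenvector hone n
    rwa [hL, ← pow_mul] at h
  · have heig : End.HasEigenvalue (coxeterProd (L ∘ T) n ^ n) mu :=
      End.hasEigenvalue_of_hasEigenvector ⟨End.mem_eigenspace_iff.2 (by rw [hL]; exact hxmu), hx⟩
    have hcomm' : ∀ i, Commute (coxeterProd (L ∘ T) n ^ n) ((L ∘ T) i) := fun i => by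
      rw [hL]
      exact (hcomm i).map L
    have hpos : (0 : ℝ) < q ^ n := by positivity
    rcases eq_or_abs_le_of_hasEigenvalue_coxeterProd_pow hq hquad hcomm' heig with rfl | hle
    · have hpos' : (0 : ℝ) < q ^ (n * n) := by positivity
      nlinarith
    · have hexp : q ^ ((n - 1) * n) * q ^ n = q ^ (n * n) := by
        rw [← pow_add, ← Nat.succ_mul]
        rcases n with _ | n <;> rfl
      nlinarith [neg_abs_le mu]

theorem posSemidef_sub_of_forall_le (hA : A.IsHermitian) {lam : ℝ}
    (hmin : ∀ mu : ℝ, (∃ x : X → ℝ, x ≠ 0 ∧ A *ᵥ x = mu • x) → lam ≤ mu) :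
    (A - lam • 1).PosSemidef := by
  have hH : (A - lam • (1 : Matrix X X ℝ)).IsHermitian :=
    hA.sub (Matrix.isHermitian_one.smul (IsSelfAdjoint.all lam))
  refine hH.posSemidef_iff_eigenvalues_nonneg.2 fun i => ?_
  have hv := hH.mulVec_eigenvectorBasis i
  have hne : (hH.eigenvectorBasis i).ofLp ≠ 0 := fun h0 =>
    hH.eigenvectorBasis.orthonormal.ne_zero i (WithLp.ofLp_injective 2 h0)
  rw [Matrix.sub_mulVec, Matrix.smul_mulVec, Matrix.one_mulVec, sub_eq_iff_eq_add, ← add_smul] at hv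
  exact le_add_iff_nonneg_left _ |>.1 (hmin _ ⟨_, hne, hv⟩)

/-- The indicator vector of `S` shifted by `-c`; it has sum zero when `c` is the density of `S`. -/
noncomputable def shiftedIndicator (S : Finset X) (c : ℝ) : X → ℝ :=
  (fun a => if a ∈ S then 1 else 0) - c • 1

theorem RatioBounded.shiftedIndicator_dotProduct_mulVec (hA : A.IsHermitian)
    (h : RatioBounded A k Q) (hQ : 0 ≤ Q) {S : Finset X} (hS : ∀ a ∈ S, ∀ b ∈ S, A a b = 0)
    (hcard : S.card * (Q + 1) = Fintype.card X) (lam : ℝ) :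
    shiftedIndicator S (Q + 1)⁻¹ ⬝ᵥ (A - lam • 1) *ᵥ shiftedIndicator S (Q + 1)⁻¹ =
      -(S.card * (Q + 1)⁻¹ * (k + lam * Q)) := by
  set e : X → ℝ := fun a => if a ∈ S then 1 else 0
  have hone : (1 : X → ℝ) ⬝ᵥ 1 = S.card * (Q + 1) := by simp [dotProduct, hcard]
  have hoe : (1 : X → ℝ) ⬝ᵥ e = S.card := by simp [dotProduct, e]
  have hee : e ⬝ᵥ e = S.card := by simp [dotProduct, e]
  have heAe : e ⬝ᵥ A *ᵥ e = 0 := by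
    simp only [dotProduct, Matrix.mulVec, e, ite_mul, one_mul, zero_mul, mul_ite, mul_one, mul_zero,
      Finset.sum_ite_mem, Finset.univ_inter]
    exact Finset.sum_eq_zero fun a ha => Finset.sum_eq_zero fun b hb => hS a ha b hb
  have hoAe : (1 : X → ℝ) ⬝ᵥ A *ᵥ e = k * S.card := by
    rw [Matrix.dotProduct_mulVec, ← Matrix.mulVec_transpose,
      ← Matrix.conjTranspose_eq_transpose_of_trivial, hA.eq, h.mulVec_one,
      smul_dotProduct, hoe, smul_eq_mul]
  have hQ' : Q + 1 ≠ 0 := by positivity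
  have he : shiftedIndicator S (Q + 1)⁻¹ = e - (Q + 1)⁻¹ • 1 := rfl
  rw [he, Matrix.sub_mulVec, Matrix.smul_mulVec, Matrix.one_mulVec, Matrix.mulVec_sub,
    Matrix.mulVec_smul, h.mulVec_one]
  simp only [dotProduct_sub, sub_dotProduct, smul_dotProduct, dotProduct_smul, heAe, hoAe, hee, hoe,
    dotProduct_comm e 1, hone, smul_eq_mul]
  field_simp
  ring

-- Hoffman's argument: the positive semidefinite form of `A - lam` vanishes at the shifted indicator
-- of a coclique attaining the bound, so this vector is an eigenvector for `lam`.
theorem RatioBounded.neg_mul_indicator_add_mulVec (hA : A.IsHermitian) (h : RatioBounded A k Q)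
    (hQ : 0 ≤ Q) {lam : ℝ} (hlam : ∃ x : X → ℝ, x ≠ 0 ∧ A *ᵥ x = lam • x)
    (hmin : ∀ mu : ℝ, (∃ x : X → ℝ, x ≠ 0 ∧ A *ᵥ x = mu • x) → lam ≤ mu)
    {S : Finset X} (hS : ∀ a ∈ S, ∀ b ∈ S, A a b = 0)
    (hcard : S.card * (Q + 1) = Fintype.card X) (a : X) :
    -lam * (if a ∈ S then 1 else 0) + (A *ᵥ fun b => if b ∈ S then 1 else 0) a = -lam := by
  have hpsd := posSemidef_sub_of_forall_le hA hmin
  have hform := h.shiftedIndicator_dotProduct_mulVec hA hQ hS hcard lam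
  have hbound : 0 ≤ k + lam * Q := by
    obtain ⟨x, hx, hxlam⟩ := hlam
    linarith [h.neg_le_mul lam x hx hxlam]
  have hspos : (0 : ℝ) < S.card := by
    have : (0 : ℝ) < Fintype.card X := by exact_mod_cast Fintype.card_pos_iff.2 ⟨a⟩
    exact pos_of_mul_pos_left (hcard ▸ this) (by positivity)
  have hnonneg := hpsd.dotProduct_mulVec_nonneg (shiftedIndicator S (Q + 1)⁻¹)
  rw [star_trivial] at hnonneg
  have hQ' : 0 < (Q + 1)⁻¹ := by positivity
  have hk : k + lam * Q = 0 := by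
    refine le_antisymm ?_ hbound
    by_contra! hpos
    linarith [mul_pos (mul_pos hspos hQ') hpos]
  have hzero : (A - lam • 1) *ᵥ shiftedIndicator S (Q + 1)⁻¹ = 0 := by
    refine (hpsd.dotProduct_mulVec_zero_iff _).1 ?_
    rw [star_trivial, hform, hk, mul_zero, neg_zero]
  have hya := congrFun hzero a
  rw [shiftedIndicator, Matrix.sub_mulVec, Matrix.smul_mulVec, Matrix.one_mulVec, Matrix.mulVec_sub,
    Matrix.mulVec_smul, h.mulVec_one] at hya
  simp only [Pi.sub_apply, Pi.smul_apply, Pi.one_apply, Pi.zero_apply, smul_eq_mul, mul_one] at hya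
  have hcancel : (Q + 1)⁻¹ * (Q + 1) = 1 := inv_mul_cancel₀ (by positivity)
  linear_combination hya + (Q + 1)⁻¹ * hk - lam * hcancel

theorem RatioBounded.neg_mul_indicator_add_ncard {r : X → X → Prop} (hr : ∀ a b, r a b → r b a)
    (h : RatioBounded (relMat r) k Q) (hQ : 0 ≤ Q) {lam : ℝ}
    (hlam : ∃ x : X → ℝ, x ≠ 0 ∧ relMat r *ᵥ x = lam • x)
    (hmin : ∀ mu : ℝ, (∃ x : X → ℝ, x ≠ 0 ∧ relMat r *ᵥ x = mu • x) → lam ≤ mu)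
    {S : Set X} (hS : ∀ a ∈ S, ∀ b ∈ S, ¬r a b) (hcard : S.ncard * (Q + 1) = Nat.card X) (a : X) :
    -lam * (if a ∈ S then 1 else 0) + ({b ∈ S | r b a}.ncard : ℝ) = -lam := by
  have hncard : (relMat r *ᵥ fun b => if b ∈ S.toFinset then 1 else 0) a =
      ({b ∈ S | r b a}.ncard : ℝ) := by
    rw [relMat_mulVec, Finset.sum_boole, Finset.filter_filter, ← ncard_setOf_eq_card_filter]
    congr 2
    ext b
    simp only [Set.mem_ofPred_eq, Set.mem_toFinset]
    exact and_comm.trans (and_congr_right fun _ => ⟨hr a b, hr b a⟩)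
  have hind := RatioBounded.neg_mul_indicator_add_mulVec (A := relMat r) (S := S.toFinset)
    (transpose_relMat hr) h hQ hlam hmin
    (fun a ha b hb => if_neg (hS a (Set.mem_toFinset.1 ha) b (Set.mem_toFinset.1 hb)))
    (by rw [← Set.ncard_eq_toFinset_card', hcard, Nat.card_eq_fintype_card]) a
  rwa [hncard, if_congr Set.mem_toFinset rfl rfl] at hind

end RatioBound

section Covers

variable {F V : Type*} [Field F] [AddCommGroup V] [Module F V] [FiniteDimensional F V]

theorem sup_eq_of_finrank_eq_add_one {U X Y : Submodule F V} (hUX : U ≤ X)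
    (hX : finrank F X = finrank F U + 1) (hYX : Y ≤ X) (hYU : ¬Y ≤ U) : U ⊔ Y = X := by
  have := Submodule.finrank_lt_finrank_of_lt (left_lt_sup.2 hYU)
  exact Submodule.eq_of_le_of_finrank_le (sup_le hUX hYX) (by omega)

theorem eq_sup_span_singleton {U X : Submodule F V} (hUX : U ≤ X)
    (hX : finrank F X = finrank F U + 1) {x : V} (hxX : x ∈ X) (hxU : x ∉ U) :
    X = U ⊔ F ∙ x :=
  (sup_eq_of_finrank_eq_add_one hUX hX ((Submodule.span_singleton_le_iff_mem _ _).2 hxX)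
    ((Submodule.span_singleton_le_iff_mem _ _).not.2 hxU)).symm

theorem inf_eq_left_of_finrank_eq_add_one {U X H : Submodule F V} (hUX : U ≤ X)
    (hX : finrank F X = finrank F U + 1) (hUH : U ≤ H) (hXH : ¬X ≤ H) : X ⊓ H = U := by
  have := Submodule.finrank_lt_finrank_of_lt (inf_lt_left.2 hXH)
  exact (Submodule.eq_of_le_of_finrank_le (le_inf hUX hUH) (by omega)).symm

end Covers

section Perp

variable {F V : Type} [Field F] [AddCommGroup V] [Module F V] {B : V →ₗ[F] V →ₗ[F] F}

theorem bperp_eq_orthogonal (B : V →ₗ[F] V →ₗ[F] F) (W : Submodule F V) :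
    bperp B W = LinearMap.BilinForm.orthogonal B W := by
  ext v
  simp only [bperp, Submodule.mem_iInf, LinearMap.mem_ker, LinearMap.BilinForm.mem_orthogonal_iff]

theorem mem_bperp {W : Submodule F V} {v : V} : v ∈ bperp B W ↔ ∀ w ∈ W, B w v = 0 := by
  rw [bperp_eq_orthogonal]
  rfl

theorem bperp_anti {X Y : Submodule F V} (h : X ≤ Y) : bperp B Y ≤ bperp B X :=
  fun _ hv => mem_bperp.2 fun w hw => mem_bperp.1 hv w (h hw)

theorem isTotIso_iff_le_bperp {X : Submodule F V} : IsTotIso B X ↔ X ≤ bperp B X :=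
  ⟨fun h x hx => mem_bperp.2 fun w hw => h w hw x hx, fun h u hu _ hw => mem_bperp.1 (h hw) u hu⟩

section Alternating

variable (halt : IsAltForm B)
include halt

theorem le_bperp_comm {X Y : Submodule F V} : X ≤ bperp B Y ↔ Y ≤ bperp B X := by
  have key : ∀ X Y : Submodule F V, X ≤ bperp B Y → Y ≤ bperp B X := fun X Y h y hy =>
    mem_bperp.2 fun x hx => LinearMap.IsAlt.isRefl halt _ _ (mem_bperp.1 (h hx) y hy)
  exact ⟨key X Y, key Y X⟩

theorem bperp_sup (X Y : Submodule F V) : bperp B (X ⊔ Y) = bperp B X ⊓ bperp B Y := by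
  refine le_antisymm (le_inf (bperp_anti le_sup_left) (bperp_anti le_sup_right)) ?_
  rw [le_bperp_comm halt]
  exact sup_le ((le_bperp_comm halt).1 inf_le_left) ((le_bperp_comm halt).1 inf_le_right)

theorem nondegenerate_of_isAltForm (hnd : NondegForm B) : LinearMap.BilinForm.Nondegenerate B :=
  ⟨hnd, fun v hv => hnd v fun w => LinearMap.IsAlt.isRefl halt _ _ (hv w)⟩

end Alternating

variable [FiniteDimensional F V]

theorem IsTotIso.of_finrank_eq_add_one (halt : IsAltForm B) {U X : Submodule F V}
    (hU : IsTotIso B U) (hUX : U ≤ X) (hXU : X ≤ bperp B U)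
    (hX : finrank F X = finrank F U + 1) : IsTotIso B X := by
  have hne : ¬X ≤ U := fun h => by
    have := Submodule.finrank_mono h
    omega
  obtain ⟨x, hxX, hxU⟩ := SetLike.not_le_iff_exists.1 hne
  have hx : F ∙ x ≤ bperp B (F ∙ x) := by
    rw [Submodule.span_singleton_le_iff_mem, mem_bperp]
    intro w hw
    obtain ⟨a, rfl⟩ := Submodule.mem_span_singleton.1 hw
    rw [map_smul, LinearMap.smul_apply, halt x, smul_zero]
  have hxU' : F ∙ x ≤ bperp B U := (Submodule.span_singleton_le_iff_mem _ _).2 (hXU hxX)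
  rw [isTotIso_iff_le_bperp, eq_sup_span_singleton hUX hX hxX hxU, bperp_sup halt]
  exact sup_le (le_inf (isTotIso_iff_le_bperp.1 hU) ((le_bperp_comm halt).1 hxU')) (le_inf hxU' hx)

section Nondegenerate

variable (halt : IsAltForm B) (hnd : NondegForm B)
include halt hnd

theorem bperp_bperp (X : Submodule F V) : bperp B (bperp B X) = X := by
  rw [bperp_eq_orthogonal, bperp_eq_orthogonal]
  exact LinearMap.BilinForm.orthogonal_orthogonal (nondegenerate_of_isAltForm halt hnd)
    (LinearMap.IsAlt.isRefl halt) X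

theorem bperp_inf (X Y : Submodule F V) : bperp B (X ⊓ Y) = bperp B X ⊔ bperp B Y := by
  rw [← bperp_bperp halt hnd (bperp B X ⊔ bperp B Y), bperp_sup halt, bperp_bperp halt hnd,
    bperp_bperp halt hnd]

theorem finrank_bperp_add_finrank (X : Submodule F V) :
    finrank F (bperp B X) + finrank F X = finrank F V := by
  rw [bperp_eq_orthogonal,
    LinearMap.BilinForm.finrank_orthogonal (nondegenerate_of_isAltForm halt hnd)]
  have := Submodule.finrank_le X
  omega

theorem finrank_bperp_inf_add_finrank (X Y : Submodule F V) :
    finrank F ↥(bperp B X ⊓ Y) + finrank F X = finrank F ↥(bperp B Y ⊓ X) + finrank F Y := by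
  have hperp := finrank_bperp_add_finrank halt hnd (bperp B X ⊓ Y)
  rw [bperp_inf halt hnd, bperp_bperp halt hnd, sup_comm] at hperp
  have hsup := Submodule.finrank_sup_add_finrank_inf_eq (bperp B Y) X
  have hY := finrank_bperp_add_finrank halt hnd Y
  omega

theorem bperp_inf_eq_bot_comm {X Y : Submodule F V} (hXY : finrank F X = finrank F Y) :
    bperp B X ⊓ Y = ⊥ ↔ bperp B Y ⊓ X = ⊥ := by
  have := finrank_bperp_inf_add_finrank halt hnd X Y
  rw [← Submodule.finrank_eq_zero (R := F), ← Submodule.finrank_eq_zero (R := F)]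
  omega

end Nondegenerate

end Perp

section Counting

variable {F V : Type*} [Field F] [AddCommGroup V] [Module F V] [FiniteDimensional F V]

theorem inf_eq_bot_iff_not_le_sup_inf {U X W K : Submodule F V} (hUK : U ⊓ K = ⊥) (hUX : U ≤ X)
    (hXW : X ≤ W) (hX : finrank F X = finrank F U + 1) :
    K ⊓ X = ⊥ ↔ ¬X ≤ U ⊔ K ⊓ W := by
  constructor
  · intro hKX hle
    have hXU : X = U := calc
      X = (U ⊔ K ⊓ W) ⊓ X := (inf_eq_right.2 hle).symm
      _ = U ⊔ K ⊓ W ⊓ X := sup_inf_assoc_of_le _ hUX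
      _ = U := by rw [inf_right_comm, hKX, bot_inf_eq, sup_bot_eq]
    rw [hXU] at hX
    omega
  · intro hle
    have hU := inf_eq_left_of_finrank_eq_add_one hUX hX le_sup_left hle
    rw [eq_bot_iff, ← hUK]
    exact le_inf (hU ▸ le_inf inf_le_right (le_sup_of_le_right (inf_le_inf_left K hXW))) inf_le_left

theorem ncard_coe_submodule (X : Submodule F V) : (X : Set V).ncard = Nat.card F ^ finrank F X := by
  rw [← Module.natCard_eq_pow_finrank (K := F) (V := X)]
  rfl

/-- The subspaces of `W` that contain `U` with codimension one. -/
def coversIn (U W : Submodule F V) : Set (Submodule F V) :=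
  {X | U ≤ X ∧ X ≤ W ∧ finrank F X = finrank F U + 1}

theorem mem_coversIn_and_mem_iff {U W X : Submodule F V} (hUW : U ≤ W) {y : V} (hyW : y ∈ W)
    (hyU : y ∉ U) : X ∈ coversIn U W ∧ y ∈ X ↔ X = U ⊔ F ∙ y := by
  refine ⟨fun ⟨⟨hUX, _, hX⟩, hyX⟩ => eq_sup_span_singleton hUX hX hyX hyU, ?_⟩
  rintro rfl
  exact ⟨⟨le_sup_left, sup_le hUW ((Submodule.span_singleton_le_iff_mem _ _).2 hyW),
    Submodule.finrank_sup_span_singleton hyU⟩,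
    Submodule.mem_sup_right (Submodule.mem_span_singleton_self y)⟩

variable [Finite F]

theorem ncard_submodule_sdiff {U X : Submodule F V} (hUX : U ≤ X)
    (hX : finrank F X = finrank F U + 1) :
    ((X : Set V) \ U).ncard = Nat.card F ^ finrank F U * (Nat.card F - 1) := by
  have : Finite V := Module.finite_of_finite F
  rw [Set.ncard_sdiff (SetLike.coe_subset_coe.2 hUX), ncard_coe_submodule, ncard_coe_submodule, hX,
    pow_succ, Nat.mul_sub_one]

-- Double count the pairs `y ∈ X` with `y ∈ W \ H`: such a `y` determines `X = U ⊔ ⟨y⟩`, and `X`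
-- contains the `y` in `X \ U`.
theorem ncard_coversIn_not_le {U W H : Submodule F V} (hUH : U ≤ H) (hHW : H ≤ W)
    (hW : finrank F W = finrank F H + 1) :
    {X ∈ coversIn U W | ¬X ≤ H}.ncard = Nat.card F ^ (finrank F H - finrank F U) := by
  have : Finite V := Module.finite_of_finite F
  have : Fintype V := Fintype.ofFinite V
  have : Fintype (Submodule F V) := Fintype.ofFinite _
  have hpairs := Finset.card_mul_eq_card_mul (fun (y : V) (X : Submodule F V) => y ∈ X)
    (s := ((W : Set V) \ H).toFinset) (t := {X ∈ coversIn U W | ¬X ≤ H}.toFinset) (m := 1)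
    (n := Nat.card F ^ finrank F U * (Nat.card F - 1)) (fun y hy => ?_) (fun X hX => ?_)
  · rw [← Set.ncard_eq_toFinset_card', ← Set.ncard_eq_toFinset_card',
      ncard_submodule_sdiff hHW hW, mul_one, ← mul_assoc] at hpairs
    have hq : 1 < Nat.card F := Finite.one_lt_card
    have hH : finrank F H = finrank F H - finrank F U + finrank F U :=
      (Nat.sub_add_cancel (Submodule.finrank_mono hUH)).symm
    rw [hH, pow_add] at hpairs
    exact (Nat.eq_of_mul_eq_mul_right (by positivity)
      (Nat.eq_of_mul_eq_mul_right (by omega) hpairs)).symm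
  · have hy : y ∈ (W : Set V) \ H := Set.mem_toFinset.1 hy
    refine Finset.card_eq_one.2 ⟨U ⊔ F ∙ y, ?_⟩
    ext X
    rw [Finset.mem_bipartiteAbove, Set.mem_toFinset, Finset.mem_singleton,
      ← mem_coversIn_and_mem_iff (hUH.trans hHW) hy.1 fun h => hy.2 (hUH h)]
    exact ⟨fun ⟨⟨hX, _⟩, hyX⟩ => ⟨hX, hyX⟩, fun ⟨hX, hyX⟩ => ⟨⟨hX, fun h => hy.2 (h hyX)⟩, hyX⟩⟩
  · obtain ⟨⟨hUX, hXW, hXU⟩, hXH⟩ := Set.mem_toFinset.1 hX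
    rw [← ncard_submodule_sdiff hUX hXU, Set.ncard_eq_toFinset_card']
    congr 1
    ext y
    simp only [Finset.mem_bipartiteBelow, Set.mem_toFinset, Set.mem_sdiff, SetLike.mem_coe]
    have hinf := inf_eq_left_of_finrank_eq_add_one hUX hXU hUH hXH
    exact ⟨fun ⟨⟨_, hyH⟩, hyX⟩ => ⟨hyX, fun hyU => hyH (hUH hyU)⟩,
      fun ⟨hyX, hyU⟩ => ⟨⟨hXW hyX, fun hyH => hyU (hinf ▸ ⟨hyX, hyH⟩)⟩, hyX⟩⟩

end Counting

namespace SFlag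

variable {F V : Type} [Field F] [AddCommGroup V] [Module F V] {B : V →ₗ[F] V →ₗ[F] F}
  {J : Finset ℕ}

theorem ext_space {C C' : SFlag B J} (h : ∀ i ∈ J, C.space i = C'.space i) : C = C' := by
  have hspace : C.space = C'.space := funext fun i => by
    by_cases hi : i ∈ J
    · exact h i hi
    · rw [C.eq_bot i hi, C'.eq_bot i hi]
  cases C
  cases C'
  cases hspace
  rfl

noncomputable instance instFintype [Finite F] [FiniteDimensional F V] : Fintype (SFlag B J) := by
  have : Finite V := Module.finite_of_finite F
  have : Finite (SFlag B J) :=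
    Finite.of_injective (fun (C : SFlag B J) (i : J) => C.space i) fun _ _ h =>
      ext_space fun i hi => congrFun h ⟨i, hi⟩
  exact Fintype.ofFinite _

theorem finrank_space (C : SFlag B J) {i : ℕ} (hi : i ∈ insert 0 J) :
    finrank F (C.space i) = i := by
  by_cases hiJ : i ∈ J
  · exact C.finrank_eq i hiJ
  · rw [C.eq_bot i hiJ, finrank_bot, (Finset.mem_insert.1 hi).resolve_right hiJ]

/-- The flag of type `J.erase i` left after forgetting the entry of dimension `i`. -/
def erase (C : SFlag B J) (i : ℕ) : SFlag B (J.erase i) where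
  space := Function.update C.space i ⊥
  isotropic j hj := by
    rw [Function.update_of_ne (Finset.ne_of_mem_erase hj)]
    exact C.isotropic j (Finset.mem_of_mem_erase hj)
  finrank_eq j hj := by
    rw [Function.update_of_ne (Finset.ne_of_mem_erase hj)]
    exact C.finrank_eq j (Finset.mem_of_mem_erase hj)
  mono j hj k hk hjk := by
    rw [Function.update_of_ne (Finset.ne_of_mem_erase hj),
      Function.update_of_ne (Finset.ne_of_mem_erase hk)]
    exact C.mono j (Finset.mem_of_mem_erase hj) k (Finset.mem_of_mem_erase hk) hjk
  eq_bot j hj := by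
    rcases eq_or_ne j i with rfl | hji
    · exact Function.update_self ..
    · rw [Function.update_of_ne hji]
      exact C.eq_bot j fun h => hj (Finset.mem_erase.2 ⟨hji, h⟩)

theorem erase_space_of_ne (C : SFlag B J) {i j : ℕ} (hji : j ≠ i) :
    (C.erase i).space j = C.space j :=
  Function.update_of_ne hji ..

theorem erase_eq_erase_iff {C C' : SFlag B J} {i : ℕ} :
    C.erase i = C'.erase i ↔ ∀ j ≠ i, C.space j = C'.space j := by
  constructor
  · intro h j hji
    rw [← erase_space_of_ne C hji, h, erase_space_of_ne C' hji]
  · intro h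
    refine ext_space fun j hj => ?_
    have hji := Finset.ne_of_mem_erase hj
    rw [erase_space_of_ne C hji, erase_space_of_ne C' hji, h j hji]

theorem flagOpp_iff_erase {C C' : SFlag B J} {i : ℕ} (hi : i ∈ J) :
    FlagOpp C C' ↔
      FlagOpp (C.erase i) (C'.erase i) ∧ bperp B (C.space i) ⊓ C'.space i = ⊥ := by
  constructor
  · refine fun h => ⟨fun j hj => ?_, h i hi⟩
    have hji := Finset.ne_of_mem_erase hj
    rw [erase_space_of_ne C hji, erase_space_of_ne C' hji]
    exact h j (Finset.mem_of_mem_erase hj)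
  · rintro ⟨hopp, hi⟩ j hj
    by_cases hji : j = i
    · rwa [hji]
    · rw [← erase_space_of_ne C hji, ← erase_space_of_ne C' hji]
      exact hopp j (Finset.mem_erase.2 ⟨hji, hj⟩)

theorem eq_of_erase_eq_of_space_eq {C C' : SFlag B J} {i : ℕ} (h : C.erase i = C'.erase i)
    (hi : C.space i = C'.space i) : C = C' :=
  ext_space fun j _ => by
    by_cases hji : j = i
    · rw [hji, hi]
    · exact erase_eq_erase_iff.1 h j hji

/-- The largest subspace that an entry of dimension `i + 1` may be chosen in: for `i + 1 ∉ J`, the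
flags of type `insert (i + 1) J` extending `C` are given by the covers of `C.space i` in it. -/
def upper (C : SFlag B J) (i : ℕ) : Submodule F V :=
  bperp B (C.space i) ⊓ ⨅ j ∈ J, ⨅ _ : i < j, C.space j

theorem le_upper_iff {C : SFlag B J} {i : ℕ} {X : Submodule F V} :
    X ≤ C.upper i ↔ X ≤ bperp B (C.space i) ∧ ∀ j ∈ J, i < j → X ≤ C.space j := by
  simp only [upper, le_inf_iff, le_iInf_iff]

theorem upper_eq_bperp (C : SFlag B J) {i : ℕ} (h : ∀ j ∈ J, j ≤ i) :
    C.upper i = bperp B (C.space i) :=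
  le_antisymm inf_le_left (le_upper_iff.2 ⟨le_rfl, fun j hj hij => absurd hij (h j hj).not_gt⟩)

variable [FiniteDimensional F V]

theorem isTotIso_space (C : SFlag B J) {i : ℕ} (hi : i ∈ insert 0 J) : IsTotIso B (C.space i) := by
  rcases Finset.mem_insert.1 hi with rfl | hi
  · rw [Submodule.finrank_eq_zero.1 (C.finrank_space (Finset.mem_insert_self 0 J))]
    rintro u hu - -
    rw [(Submodule.mem_bot F).1 hu, map_zero, LinearMap.zero_apply]
  · exact C.isotropic i hi

theorem space_le_space (C : SFlag B J) {i j : ℕ} (hi : i ∈ insert 0 J) (hj : j ∈ insert 0 J)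
    (hij : i ≤ j) : C.space i ≤ C.space j := by
  have hbot : C.space 0 = ⊥ :=
    Submodule.finrank_eq_zero.1 (C.finrank_space (Finset.mem_insert_self 0 J))
  rcases Finset.mem_insert.1 hi with rfl | hi
  · exact hbot ▸ bot_le
  · rcases Finset.mem_insert.1 hj with rfl | hj
    · rw [Nat.le_zero.1 hij]
    · exact C.mono i hi j hj hij

theorem _root_.FlagOpp.bperp_inf_eq_bot {C C' : SFlag B J} (h : FlagOpp C C') {i : ℕ}
    (hi : i ∈ insert 0 J) : bperp B (C.space i) ⊓ C'.space i = ⊥ := by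
  rcases Finset.mem_insert.1 hi with rfl | hi
  · rw [Submodule.finrank_eq_zero.1 (C'.finrank_space (Finset.mem_insert_self 0 J)), inf_bot_eq]
  · exact h i hi

theorem _root_.FlagOpp.symm (halt : IsAltForm B) (hnd : NondegForm B) {C C' : SFlag B J}
    (h : FlagOpp C C') : FlagOpp C' C := fun i hi =>
  (bperp_inf_eq_bot_comm halt hnd (by rw [C.finrank_eq i hi, C'.finrank_eq i hi])).1 (h i hi)

theorem space_le_upper (C : SFlag B J) {i : ℕ} (hi : i ∈ insert 0 J) : C.space i ≤ C.upper i :=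
  le_upper_iff.2 ⟨isTotIso_iff_le_bperp.1 (C.isTotIso_space hi), fun _ hj hij =>
    C.space_le_space hi (Finset.mem_insert_of_mem hj) hij.le⟩

theorem upper_eq_space (C : SFlag B J) {i b : ℕ} (hi : i ∈ insert 0 J) (hb : b ∈ J) (hib : i < b)
    (hmin : ∀ j ∈ J, i < j → b ≤ j) : C.upper i = C.space b := by
  refine le_antisymm ((le_upper_iff.1 le_rfl).2 b hb hib) (le_upper_iff.2 ⟨?_, fun j hj hij =>
    C.mono b hb j hj (hmin j hj hij)⟩)
  exact (isTotIso_iff_le_bperp.1 (C.isotropic b hb)).trans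
    (bperp_anti (C.space_le_space hi (Finset.mem_insert_of_mem hb) hib.le))

theorem finrank_upper_of_isLeast (C : SFlag B J) {i b : ℕ} (hi : i ∈ insert 0 J) (hb : b ∈ J)
    (hib : i < b) (hmin : ∀ j ∈ J, i < j → b ≤ j) : finrank F (C.upper i) = b := by
  rw [C.upper_eq_space hi hb hib hmin, C.finrank_eq b hb]

theorem finrank_upper_of_forall_le (halt : IsAltForm B) (hnd : NondegForm B) (C : SFlag B J) {i : ℕ}
    (hi : i ∈ insert 0 J) (h : ∀ j ∈ J, j ≤ i) : finrank F (C.upper i) = finrank F V - i := by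
  have := finrank_bperp_add_finrank halt hnd (C.space i)
  rw [C.finrank_space hi] at this
  rw [C.upper_eq_bperp h]
  omega

theorem mem_insert_zero_erase_succ {i : ℕ} (hi : i ∈ insert 0 J) :
    i ∈ insert 0 (J.erase (i + 1)) := by
  simpa using hi

theorem space_mem_coversIn_upper (C : SFlag B J) {i : ℕ} (hi : i ∈ insert 0 J) (hi' : i + 1 ∈ J) :
    C.space (i + 1) ∈ coversIn ((C.erase (i + 1)).space i) ((C.erase (i + 1)).upper i) := by
  rw [coversIn, Set.mem_ofPred_eq, le_upper_iff, erase_space_of_ne C i.lt_succ_self.ne,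
    C.finrank_space hi, C.finrank_eq _ hi']
  have hmono := C.space_le_space hi (Finset.mem_insert_of_mem hi') i.le_succ
  refine ⟨hmono, ⟨?_, fun j hj hij => ?_⟩, rfl⟩
  · exact (isTotIso_iff_le_bperp.1 (C.isotropic _ hi')).trans (bperp_anti hmono)
  · rw [erase_space_of_ne C (Finset.ne_of_mem_erase hj)]
    exact C.mono _ hi' j (Finset.mem_of_mem_erase hj) hij

/-- The flag of type `J` with entry `X` in dimension `i + 1` that becomes `G` when this entry is
forgotten. -/
def ofErase (halt : IsAltForm B) {i : ℕ} (hi : i ∈ insert 0 J) (hi' : i + 1 ∈ J)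
    (G : SFlag B (J.erase (i + 1))) {X : Submodule F V}
    (hX : X ∈ coversIn (G.space i) (G.upper i)) : SFlag B J :=
  have hiG := mem_insert_zero_erase_succ hi
  have hmem : ∀ j ∈ J, j ≠ i + 1 → j ∈ J.erase (i + 1) := fun j hj hji =>
    Finset.mem_erase.2 ⟨hji, hj⟩
  { space := Function.update G.space (i + 1) X
    isotropic := fun j hj => by
      rcases eq_or_ne j (i + 1) with rfl | hji
      · rw [Function.update_self]
        exact (G.isTotIso_space hiG).of_finrank_eq_add_one halt hX.1 (le_upper_iff.1 hX.2.1).1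
          hX.2.2
      · rw [Function.update_of_ne hji]
        exact G.isotropic j (hmem j hj hji)
    finrank_eq := fun j hj => by
      rcases eq_or_ne j (i + 1) with rfl | hji
      · rw [Function.update_self, hX.2.2, G.finrank_space hiG]
      · rw [Function.update_of_ne hji]
        exact G.finrank_eq j (hmem j hj hji)
    mono := fun j hj k hk hjk => by
      rcases eq_or_ne j (i + 1) with rfl | hji <;> rcases eq_or_ne k (i + 1) with rfl | hki
      · rfl
      · rw [Function.update_self, Function.update_of_ne hki]
        exact (le_upper_iff.1 hX.2.1).2 k (hmem k hk hki) hjk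
      · rw [Function.update_self, Function.update_of_ne hji]
        exact (G.space_le_space (Finset.mem_insert_of_mem (hmem j hj hji)) hiG (by omega)).trans
          hX.1
      · rw [Function.update_of_ne hji, Function.update_of_ne hki]
        exact G.mono j (hmem j hj hji) k (hmem k hk hki) hjk
    eq_bot := fun j hj => by
      rw [Function.update_of_ne (ne_of_mem_of_not_mem hi' hj).symm]
      exact G.eq_bot j fun h => hj (Finset.mem_of_mem_erase h) }

theorem exists_erase_eq (halt : IsAltForm B) {i : ℕ} (hi : i ∈ insert 0 J) (hi' : i + 1 ∈ J)
    (G : SFlag B (J.erase (i + 1))) {X : Submodule F V}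
    (hX : X ∈ coversIn (G.space i) (G.upper i)) :
    ∃ C : SFlag B J, C.erase (i + 1) = G ∧ C.space (i + 1) = X := by
  refine ⟨ofErase halt hi hi' G hX, ext_space fun j hj => ?_, Function.update_self ..⟩
  have hji := Finset.ne_of_mem_erase hj
  rw [erase_space_of_ne _ hji]
  exact Function.update_of_ne hji ..

theorem ncard_setOf_erase_eq (halt : IsAltForm B) {i : ℕ} (hi : i ∈ insert 0 J) (hi' : i + 1 ∈ J)
    (G : SFlag B (J.erase (i + 1))) (p : Submodule F V → Prop) :
    {C : SFlag B J | C.erase (i + 1) = G ∧ p (C.space (i + 1))}.ncard =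
      {X ∈ coversIn (G.space i) (G.upper i) | p X}.ncard := by
  refine Set.ncard_congr (fun C _ => C.space (i + 1)) ?_ ?_ ?_
  · rintro C ⟨rfl, hp⟩
    exact ⟨C.space_mem_coversIn_upper hi hi', hp⟩
  · rintro C C' ⟨hC, -⟩ ⟨hC', -⟩ h
    exact eq_of_erase_eq_of_space_eq (hC.trans hC'.symm) h
  · rintro X ⟨hX, hp⟩
    obtain ⟨C, hC, rfl⟩ := exists_erase_eq halt hi hi' G hX
    exact ⟨C, ⟨hC, hp⟩, rfl⟩

theorem erase_surjective (halt : IsAltForm B) {i : ℕ} (hi : i ∈ insert 0 J) (hi' : i + 1 ∈ J)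
    (hupper : ∀ G : SFlag B (J.erase (i + 1)), i < finrank F (G.upper i)) :
    Function.Surjective fun C : SFlag B J => C.erase (i + 1) := fun G => by
  have hiG := mem_insert_zero_erase_succ hi
  have hle := G.space_le_upper hiG
  obtain ⟨x, hx, hxG⟩ : ∃ x ∈ G.upper i, x ∉ G.space i := SetLike.not_le_iff_exists.1 fun h => by
    have := Submodule.finrank_mono h
    rw [G.finrank_space hiG] at this
    exact (hupper G).not_ge this
  obtain ⟨C, hC, -⟩ := exists_erase_eq halt hi hi' G ((mem_coversIn_and_mem_iff hle hx hxG).2 rfl).1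
  exact ⟨C, hC⟩

theorem bperp_upper_inf_eq_bot (halt : IsAltForm B) (hnd : NondegForm B) {i : ℕ}
    (hi : i ∈ insert 0 J) (hi' : i + 1 ∈ J) (C : SFlag B J) {G : SFlag B (J.erase (i + 1))}
    (h : FlagOpp (C.erase (i + 1)) G) : bperp B (G.upper i) ⊓ C.space (i + 1) = ⊥ := by
  have hiG := mem_insert_zero_erase_succ hi
  by_cases hmax : ∀ j ∈ J.erase (i + 1), j ≤ i
  · have hopp := h.bperp_inf_eq_bot hiG
    rw [erase_space_of_ne C i.lt_succ_self.ne] at hopp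
    rw [G.upper_eq_bperp hmax, bperp_bperp halt hnd, eq_bot_iff, ← hopp, inf_comm]
    exact inf_le_inf_right _ ((isTotIso_iff_le_bperp.1 (C.isotropic _ hi')).trans
      (bperp_anti (C.space_le_space hi (Finset.mem_insert_of_mem hi') i.le_succ)))
  · push Not at hmax
    obtain ⟨b, ⟨hb, hib⟩, hmin⟩ :=
      WellFounded.has_min (wellFounded_lt (α := ℕ)) {j | j ∈ J.erase (i + 1) ∧ i < j} hmax
    have hopp := (h.symm halt hnd) b hb
    rw [erase_space_of_ne C (Finset.ne_of_mem_erase hb)] at hopp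
    rw [G.upper_eq_space hiG hb hib fun j hj hij => not_lt.1 (hmin j ⟨hj, hij⟩), eq_bot_iff,
      ← hopp]
    exact inf_le_inf_left _ (C.mono _ hi' b (Finset.mem_of_mem_erase hb) hib)

theorem space_inf_bperp_eq_bot {i : ℕ} (hi : i ∈ insert 0 J) (hi' : i + 1 ∈ J) (C : SFlag B J)
    {G : SFlag B (J.erase (i + 1))} (h : FlagOpp (C.erase (i + 1)) G) :
    G.space i ⊓ bperp B (C.space (i + 1)) = ⊥ := by
  have hopp := h.bperp_inf_eq_bot (mem_insert_zero_erase_succ hi)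
  rw [erase_space_of_ne C i.lt_succ_self.ne] at hopp
  rw [eq_bot_iff, ← hopp, inf_comm]
  exact inf_le_inf_right _
    (bperp_anti (C.space_le_space hi (Finset.mem_insert_of_mem hi') i.le_succ))

theorem finrank_upper_eq_finrank_sup_add_one (halt : IsAltForm B) (hnd : NondegForm B) {i : ℕ}
    (hi : i ∈ insert 0 J) (hi' : i + 1 ∈ J) (C : SFlag B J) {G : SFlag B (J.erase (i + 1))}
    (h : FlagOpp (C.erase (i + 1)) G) :
    finrank F (G.upper i) =
      finrank F ↥(G.space i ⊔ bperp B (C.space (i + 1)) ⊓ G.upper i) + 1 := by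
  have hperp := finrank_bperp_inf_add_finrank halt hnd (C.space (i + 1)) (G.upper i)
  have hsup := Submodule.finrank_sup_add_finrank_inf_eq (G.space i)
    (bperp B (C.space (i + 1)) ⊓ G.upper i)
  rw [bperp_upper_inf_eq_bot halt hnd hi hi' C h, finrank_bot, C.finrank_eq _ hi'] at hperp
  rw [← inf_assoc, space_inf_bperp_eq_bot hi hi' C h, bot_inf_eq, finrank_bot,
    G.finrank_space (mem_insert_zero_erase_succ hi)] at hsup
  omega

theorem ncard_flagOpp_erase_eq [Finite F] (halt : IsAltForm B) (hnd : NondegForm B) {i : ℕ}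
    (hi : i ∈ insert 0 J) (hi' : i + 1 ∈ J) (C : SFlag B J) {G : SFlag B (J.erase (i + 1))}
    (h : FlagOpp (C.erase (i + 1)) G) :
    {C' : SFlag B J | FlagOpp C C' ∧ C'.erase (i + 1) = G}.ncard =
      Nat.card F ^ (finrank F (G.upper i) - (i + 1)) := by
  have hiG := mem_insert_zero_erase_succ hi
  set K := bperp B (C.space (i + 1))
  have hfibre : {C' : SFlag B J | FlagOpp C C' ∧ C'.erase (i + 1) = G} =
      {C' : SFlag B J | C'.erase (i + 1) = G ∧ K ⊓ C'.space (i + 1) = ⊥} := by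
    ext C'
    rw [Set.mem_ofPred_eq, Set.mem_ofPred_eq, and_comm, flagOpp_iff_erase hi']
    exact and_congr_right fun hC' => and_iff_right (hC' ▸ h)
  have hcovers : {X ∈ coversIn (G.space i) (G.upper i) | K ⊓ X = ⊥} =
      {X ∈ coversIn (G.space i) (G.upper i) | ¬X ≤ G.space i ⊔ K ⊓ G.upper i} := by
    ext X
    exact and_congr_right fun hX =>
      inf_eq_bot_iff_not_le_sup_inf (space_inf_bperp_eq_bot hi hi' C h) hX.1 hX.2.1 hX.2.2
  have hhyper := finrank_upper_eq_finrank_sup_add_one halt hnd hi hi' C h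
  rw [hfibre, ncard_setOf_erase_eq halt hi hi' G (fun X => K ⊓ X = ⊥), hcovers,
    ncard_coversIn_not_le le_sup_left (sup_le (G.space_le_upper hiG) inf_le_right) hhyper,
    G.finrank_space hiG, hhyper, Nat.add_sub_add_right]

end SFlag

section Descent

variable {F V : Type} [Field F] [AddCommGroup V] [Module F V] {B : V →ₗ[F] V →ₗ[F] F}

/-- The adjacency matrix of the opposition graph on the flags of type `J`. -/
noncomputable def oppMat (B : V →ₗ[F] V →ₗ[F] F) (J : Finset ℕ) :
    Matrix (SFlag B J) (SFlag B J) ℝ :=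
  relMat FlagOpp

variable [FiniteDimensional F V]

theorem oppMat_transpose (halt : IsAltForm B) (hnd : NondegForm B) (J : Finset ℕ) :
    (oppMat B J)ᵀ = oppMat B J :=
  transpose_relMat fun _ _ h => h.symm halt hnd

theorem exists_finrank_upper_eq (halt : IsAltForm B) (hnd : NondegForm B) {n : ℕ}
    (hdim : finrank F V = 2 * n) {J : Finset ℕ} {i : ℕ} (hi : i ∈ insert 0 J) (hin : i < n) :
    ∃ w, i < w ∧ ∀ G : SFlag B J, finrank F (G.upper i) = w := by
  by_cases hmax : ∀ j ∈ J, j ≤ i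
  · exact ⟨2 * n - i, by omega, fun G => by
      rw [G.finrank_upper_of_forall_le halt hnd hi hmax, hdim]⟩
  · push Not at hmax
    obtain ⟨b, ⟨hb, hib⟩, hmin⟩ :=
      WellFounded.has_min (wellFounded_lt (α := ℕ)) {j | j ∈ J ∧ i < j} hmax
    exact ⟨b, hib, fun G =>
      G.finrank_upper_of_isLeast hi hb hib fun j hj hij => not_lt.1 (hmin j ⟨hj, hij⟩)⟩

variable [Finite F]

theorem RatioBounded.oppMat_erase (halt : IsAltForm B) (hnd : NondegForm B) {J : Finset ℕ} {i w : ℕ}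
    (hi : i ∈ insert 0 J) (hi' : i + 1 ∈ J) (hiw : i < w)
    (hw : ∀ G : SFlag B (J.erase (i + 1)), finrank F (G.upper i) = w) {k Q : ℝ}
    (h : RatioBounded (oppMat B J) k Q) :
    ∃ k', RatioBounded (oppMat B (J.erase (i + 1))) k' Q :=
  ⟨_, h.of_comp (SFlag.erase_surjective halt hi hi' fun G => (hw G).symm ▸ hiw)
    (Nat.cast_pos.2 (pow_pos Nat.card_pos (w - (i + 1))))
    (relMat_mulVec_comp (fun _ _ hC => ((SFlag.flagOpp_iff_erase hi').1 hC).1) fun C G hCG => by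
      rw [SFlag.ncard_flagOpp_erase_eq halt hnd hi hi' C hCG, hw])⟩

theorem exists_ratioBounded_oppMat_of_chambers (halt : IsAltForm B) (hnd : NondegForm B) {n : ℕ}
    (hdim : finrank F V = 2 * n) {Q : ℝ}
    (h : ∃ k, RatioBounded (oppMat B (Finset.Icc 1 n)) k Q) {J : Finset ℕ}
    (hJ : J ⊆ Finset.Icc 1 n) : ∃ k, RatioBounded (oppMat B J) k Q := by
  have hdescend : ∀ s ≤ n, ∃ k, RatioBounded (oppMat B (J ∪ Finset.Icc 1 s)) k Q := by
    intro s hs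
    induction hs using Nat.decreasingInduction with
    | self => rwa [Finset.union_eq_right.2 hJ]
    | of_succ s hs ih =>
      by_cases hsJ : s + 1 ∈ J
      · have : J ∪ Finset.Icc 1 s = J ∪ Finset.Icc 1 (s + 1) := by
          ext j
          simp only [Finset.mem_union, Finset.mem_Icc]
          grind
        rwa [this]
      · have herase : (J ∪ Finset.Icc 1 (s + 1)).erase (s + 1) = J ∪ Finset.Icc 1 s := by
          ext j
          simp only [Finset.mem_erase, Finset.mem_union, Finset.mem_Icc]
          grind
        have hmem : s ∈ insert 0 (J ∪ Finset.Icc 1 (s + 1)) := by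
          simp only [Finset.mem_insert, Finset.mem_union, Finset.mem_Icc]
          omega
        have hmem' : s + 1 ∈ J ∪ Finset.Icc 1 (s + 1) :=
          Finset.mem_union_right _ (Finset.mem_Icc.2 ⟨Nat.succ_pos s, le_rfl⟩)
        obtain ⟨k, hk⟩ := ih
        obtain ⟨w, hsw, hw⟩ := exists_finrank_upper_eq (B := B) halt hnd hdim
          (SFlag.mem_insert_zero_erase_succ hmem) hs
        exact herase ▸ hk.oppMat_erase halt hnd hmem hmem' hsw hw
  have hJ₀ : J ∪ Finset.Icc 1 0 = J := by rw [Finset.Icc_eq_empty (by omega), Finset.union_empty]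
  exact hJ₀ ▸ hdescend 0 n.zero_le

end Descent

section Chambers

variable {F V : Type} [Field F] [AddCommGroup V] [Module F V] [FiniteDimensional F V]
  {B : V →ₗ[F] V →ₗ[F] F} {n : ℕ}

/-- The chambers of the polar space of rank `n`: its maximal flags. -/
abbrev Chamber (B : V →ₗ[F] V →ₗ[F] F) (n : ℕ) : Type :=
  SFlag B (Finset.Icc 1 n)

theorem mem_insert_zero_Icc {i : ℕ} (hi : i ≤ n) : i ∈ insert 0 (Finset.Icc 1 n) := by
  simp only [Finset.mem_insert, Finset.mem_Icc]
  omega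

theorem succ_mem_Icc {i : ℕ} (hi : i < n) : i + 1 ∈ Finset.Icc 1 n :=
  Finset.mem_Icc.2 ⟨Nat.succ_pos i, hi⟩

theorem finrank_upper_of_chamber (halt : IsAltForm B) (hnd : NondegForm B)
    (hdim : finrank F V = 2 * n) {i : ℕ} (hi : i < n)
    (G : SFlag B ((Finset.Icc 1 n).erase (i + 1))) : finrank F (G.upper i) = i + 2 := by
  have hiG := SFlag.mem_insert_zero_erase_succ (mem_insert_zero_Icc hi.le)
  by_cases hin : i + 2 ≤ n
  · refine G.finrank_upper_of_isLeast hiG ?_ (by omega) fun j hj hij => ?_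
    · simp only [Finset.mem_erase, Finset.mem_Icc]
      omega
    · have := Finset.ne_of_mem_erase hj
      omega
  · rw [G.finrank_upper_of_forall_le halt hnd hiG, hdim]
    · omega
    · intro j hj
      simp only [Finset.mem_erase, Finset.mem_Icc] at hj
      omega

variable [Finite F]

theorem ncard_ne_and_erase_eq (halt : IsAltForm B) (hnd : NondegForm B)
    (hdim : finrank F V = 2 * n) {i : ℕ} (hi : i < n) (C : Chamber B n) :
    {C' : Chamber B n | C' ≠ C ∧ C.erase (i + 1) = C'.erase (i + 1)}.ncard = Nat.card F := by
  have hi₀ := mem_insert_zero_Icc hi.le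
  have hi₁ := succ_mem_Icc hi
  have hfibre : {C' : Chamber B n | C' ≠ C ∧ C.erase (i + 1) = C'.erase (i + 1)} =
      {C' | C'.erase (i + 1) = C.erase (i + 1) ∧ C'.space (i + 1) ≠ C.space (i + 1)} := by
    ext C'
    rw [Set.mem_ofPred_eq, Set.mem_ofPred_eq, and_comm, eq_comm]
    exact and_congr_right fun h => not_congr
      ⟨fun hC => hC ▸ rfl, fun hC => SFlag.eq_of_erase_eq_of_space_eq h hC⟩
  set G := C.erase (i + 1)
  have hC : C.space (i + 1) ∈ coversIn (G.space i) (G.upper i) :=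
    C.space_mem_coversIn_upper hi₀ hi₁
  have hcovers : {X ∈ coversIn (G.space i) (G.upper i) | X ≠ C.space (i + 1)} =
      {X ∈ coversIn (G.space i) (G.upper i) | ¬X ≤ C.space (i + 1)} := by
    ext X
    exact and_congr_right fun hX => not_congr ⟨fun h => h.le, fun h =>
      Submodule.eq_of_le_of_finrank_eq h (hX.2.2.trans hC.2.2.symm)⟩
  rw [hfibre, SFlag.ncard_setOf_erase_eq halt hi₀ hi₁ G (· ≠ C.space (i + 1)), hcovers,
    ncard_coversIn_not_le hC.1 hC.2.1, hC.2.2, Nat.add_sub_cancel_left, pow_one]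
  rw [finrank_upper_of_chamber halt hnd hdim hi, C.finrank_eq _ hi₁]

/-- The adjacency matrix of the relation that two chambers differ exactly in their entry of
dimension `i + 1`: a simple generator of the Hecke algebra acting on the chambers. -/
noncomputable def panelMat (B : V →ₗ[F] V →ₗ[F] F) (n i : ℕ) :
    Matrix (Chamber B n) (Chamber B n) ℝ :=
  relMat fun C C' => C' ≠ C ∧ C.erase (i + 1) = C'.erase (i + 1)

theorem commute_oppMat_panelMat (halt : IsAltForm B) (hnd : NondegForm B)
    (hdim : finrank F V = 2 * n) {i : ℕ} (hi : i < n) :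
    Commute (oppMat B (Finset.Icc 1 n)) (panelMat B n i) := by
  let P : Matrix (Chamber B n) (Chamber B n) ℝ :=
    relMat fun C C' => C.erase (i + 1) = C'.erase (i + 1)
  let S : Matrix (Chamber B n) (Chamber B n) ℝ :=
    relMat fun C C' => FlagOpp (C.erase (i + 1)) (C'.erase (i + 1))
  have hP : panelMat B n i + 1 = P := relMat_ne_add_one fun _ => rfl
  have hPt : Pᵀ = P := transpose_relMat fun _ _ => Eq.symm
  have hSt : Sᵀ = S := transpose_relMat fun _ _ h => h.symm halt hnd
  have hmul : oppMat B (Finset.Icc 1 n) * P = (Nat.card F : ℝ) • S := by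
    refine relMat_mul_eq_smul (fun C D C' hCD hD => ?_) fun C C' h => ?_
    · exact hD ▸ ((SFlag.flagOpp_iff_erase (succ_mem_Icc hi)).1 hCD).1
    · rw [SFlag.ncard_flagOpp_erase_eq halt hnd (mem_insert_zero_Icc hi.le) (succ_mem_Icc hi) C h,
        finrank_upper_of_chamber halt hnd hdim hi, Nat.add_sub_add_left, pow_one]
  have hmul' := congrArg Matrix.transpose hmul
  rw [Matrix.transpose_mul, oppMat_transpose halt hnd, hPt, Matrix.transpose_smul, hSt, ← hmul]
    at hmul'
  have hcomm : Commute (oppMat B (Finset.Icc 1 n)) P := hmul'.symm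
  rw [eq_sub_of_add_eq hP]
  exact hcomm.sub_right (Commute.one_right _)

end Chambers

section CoxeterElement

variable {F V : Type} [Field F] [AddCommGroup V] [Module F V] {B : V →ₗ[F] V →ₗ[F] F} {n : ℕ}

namespace Chamber

theorem finrank_space {i : ℕ} (C : Chamber B n) (hi : i ≤ n) : finrank F (C.space i) = i :=
  SFlag.finrank_space C (mem_insert_zero_Icc hi)

theorem ext_space_succ {C D : Chamber B n} (h : ∀ j < n, C.space (j + 1) = D.space (j + 1)) :
    C = D :=
  SFlag.ext_space fun j hj => by
    obtain ⟨hj₁, hjn⟩ := Finset.mem_Icc.1 hj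
    obtain ⟨j, rfl⟩ := Nat.exists_eq_add_of_le' hj₁
    exact h j hjn

variable [FiniteDimensional F V]

theorem space_zero (C : Chamber B n) : C.space 0 = ⊥ :=
  Submodule.finrank_eq_zero.1 (C.finrank_space n.zero_le)

theorem space_le {i j : ℕ} (C : Chamber B n) (hij : i ≤ j) (hj : j ≤ n) : C.space i ≤ C.space j :=
  C.space_le_space (mem_insert_zero_Icc (hij.trans hj)) (mem_insert_zero_Icc hj) hij

theorem space_le_bperp {i j : ℕ} (C : Chamber B n) (hi : i ≤ n) (hj : j ≤ n) :
    C.space i ≤ bperp B (C.space j) :=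
  (C.space_le hi le_rfl).trans
    ((isTotIso_iff_le_bperp.1 (C.isTotIso_space (mem_insert_zero_Icc le_rfl))).trans
      (bperp_anti (C.space_le hj le_rfl)))

theorem bperp_space_self (halt : IsAltForm B) (hnd : NondegForm B) (hdim : finrank F V = 2 * n)
    (C : Chamber B n) : bperp B (C.space n) = C.space n := by
  refine (Submodule.eq_of_le_of_finrank_eq (C.space_le_bperp le_rfl le_rfl) ?_).symm
  have := finrank_bperp_add_finrank halt hnd (C.space n)
  rw [C.finrank_space le_rfl] at this ⊢
  omega

end Chamber

variable [FiniteDimensional F V]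

/-- The chamber `D` is at the end of a gallery from `C` that changes, in this order, the entries of
dimension `1, …, i`: their relative position is the product of the first `i` simple generators of
the Weyl group. -/
structure CoxeterRel (i : ℕ) (C D : Chamber B n) : Prop where
  le_space_succ : ∀ j < i, D.space j ≤ C.space (j + 1)
  space_eq : ∀ j, i < j → D.space j = C.space j
  not_le : ¬C.space 1 ≤ D.space i

theorem coxeterRel_zero (hn : 0 < n) {C D : Chamber B n} : CoxeterRel 0 C D ↔ C = D := by
  constructor
  · exact fun h => Chamber.ext_space_succ fun j _ => (h.space_eq (j + 1) j.succ_pos).symm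
  · rintro rfl
    refine ⟨fun j hj => absurd hj j.not_lt_zero, fun _ _ => rfl, fun h => ?_⟩
    have := Submodule.finrank_mono h
    rw [C.finrank_space hn, C.finrank_space n.zero_le] at this
    omega

theorem CoxeterRel.succ {i : ℕ} (hi : i < n) {C D E : Chamber B n} (h : CoxeterRel i C D)
    (hne : E ≠ D) (hDE : D.erase (i + 1) = E.erase (i + 1)) : CoxeterRel (i + 1) C E := by
  have hspace := SFlag.erase_eq_erase_iff.1 hDE
  have hDC := h.space_eq (i + 1) i.lt_succ_self
  have hle : E.space i ≤ C.space (i + 1) := by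
    rw [← hspace i i.lt_succ_self.ne, ← hDC]
    exact D.space_le i.le_succ hi
  refine ⟨fun j hj => ?_, fun j hj => ?_, fun hC => hne ?_⟩
  · rcases Nat.lt_succ_iff_lt_or_eq.1 hj with hj | rfl
    · rw [← hspace j (by omega)]
      exact h.le_space_succ j hj
    · exact hle
  · rw [← hspace j hj.ne', h.space_eq j (by omega)]
  · have hsup : E.space i ⊔ C.space 1 = C.space (i + 1) :=
      sup_eq_of_finrank_eq_add_one hle
        (by rw [C.finrank_space hi, E.finrank_space hi.le]) (C.space_le (by omega) hi)
        (hspace i i.lt_succ_self.ne ▸ h.not_le)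
    refine SFlag.eq_of_erase_eq_of_space_eq hDE.symm ?_
    rw [hDC, eq_comm, ← hsup]
    refine Submodule.eq_of_le_of_finrank_eq (sup_le (E.space_le i.le_succ hi) hC) ?_
    rw [hsup, C.finrank_space hi, E.finrank_space hi]

theorem CoxeterRel.existsUnique_pred (halt : IsAltForm B) {i : ℕ} (hi : i < n) {C E : Chamber B n}
    (h : CoxeterRel (i + 1) C E) :
    ∃! D : Chamber B n, CoxeterRel i C D ∧ E ≠ D ∧ D.erase (i + 1) = E.erase (i + 1) := by
  have hle := h.le_space_succ i i.lt_succ_self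
  have hmem : C.space (i + 1) ∈
      coversIn ((E.erase (i + 1)).space i) ((E.erase (i + 1)).upper i) := by
    rw [coversIn, Set.mem_ofPred_eq, SFlag.le_upper_iff,
      SFlag.erase_space_of_ne E i.lt_succ_self.ne, C.finrank_space hi, E.finrank_space hi.le]
    refine ⟨hle, ⟨(C.space_le_bperp hi hi).trans (bperp_anti hle), fun j hj hij => ?_⟩, rfl⟩
    obtain ⟨hji, hj⟩ := Finset.mem_erase.1 hj
    rw [SFlag.erase_space_of_ne E hji, h.space_eq j (by omega)]
    exact C.space_le hij (Finset.mem_Icc.1 hj).2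
  obtain ⟨D, hDE, hDC⟩ :=
    SFlag.exists_erase_eq halt (mem_insert_zero_Icc hi.le) (succ_mem_Icc hi) _ hmem
  have hspace := SFlag.erase_eq_erase_iff.1 hDE
  refine ⟨D, ⟨⟨fun j hj => ?_, fun j hj => ?_, fun hC => ?_⟩, ?_, hDE⟩, ?_⟩
  · rw [hspace j (by omega)]
    exact h.le_space_succ j (by omega)
  · rcases eq_or_ne j (i + 1) with rfl | hji
    · exact hDC
    · rw [hspace j hji, h.space_eq j (by omega)]
  · rw [hspace i i.lt_succ_self.ne] at hC
    exact h.not_le (hC.trans (E.space_le i.le_succ hi))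
  · rintro rfl
    exact h.not_le (hDC ▸ C.space_le (by omega) hi)
  · rintro D' ⟨hD', -, hD'E⟩
    exact SFlag.eq_of_erase_eq_of_space_eq (hD'E.trans hDE.symm)
      ((hD'.space_eq _ i.lt_succ_self).trans hDC.symm)

theorem CoxeterRel.sup_eq {D E : Chamber B n} (h : CoxeterRel n D E) {j : ℕ} (hj : j < n) :
    E.space j ⊔ D.space 1 = D.space (j + 1) :=
  sup_eq_of_finrank_eq_add_one (h.le_space_succ j hj)
    (by rw [D.finrank_space hj, E.finrank_space hj.le]) (D.space_le (by omega) hj)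
    fun hle => h.not_le (hle.trans (E.space_le hj.le le_rfl))

/-- The relative position of `C` and `E` is the `m`-th power of the Coxeter element
`CoxeterRel n`; the second index is `l = n - m`. -/
structure CoxeterPowRel (m l : ℕ) (C E : Chamber B n) : Prop where
  le_space_add : ∀ j ≤ l, E.space j ≤ C.space (m + j)
  inf_bperp_le : ∀ j ≤ m, E.space (l + j) ⊓ bperp B (C.space j) ≤ E.space l

theorem coxeterPowRel_zero {C E : Chamber B n} : CoxeterPowRel 0 n C E ↔ C = E := by
  constructor
  · intro h
    refine Chamber.ext_space_succ fun j hj => (Submodule.eq_of_le_of_finrank_eq ?_ ?_).symm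
    · exact (h.le_space_add (j + 1) hj).trans_eq (by rw [zero_add])
    · rw [C.finrank_space hj, E.finrank_space hj]
  · rintro rfl
    refine ⟨fun j _ => (congrArg C.space (zero_add j)).ge, fun j hj => ?_⟩
    rw [Nat.le_zero.1 hj]
    exact inf_le_left

theorem coxeterPowRel_self_zero {C E : Chamber B n} : CoxeterPowRel n 0 C E ↔ FlagOpp C E := by
  constructor
  · intro h j hj
    have hle := h.inf_bperp_le j (Finset.mem_Icc.1 hj).2
    rwa [zero_add, E.space_zero, inf_comm, le_bot_iff] at hle
  · refine fun h => ⟨fun j hj => ?_, fun j hj => ?_⟩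
    · rw [Nat.le_zero.1 hj, E.space_zero]
      exact bot_le
    · rw [zero_add, inf_comm, h.bperp_inf_eq_bot (mem_insert_zero_Icc hj)]
      exact bot_le

theorem CoxeterPowRel.comp (halt : IsAltForm B) (hnd : NondegForm B) (hdim : finrank F V = 2 * n)
    {m l : ℕ} (hml : m + (l + 1) = n) {C D E : Chamber B n} (h : CoxeterPowRel m (l + 1) C D)
    (hDE : CoxeterRel n D E) : CoxeterPowRel (m + 1) l C E := by
  have hDC : D.space 1 ≤ C.space (m + 1) := h.le_space_add 1 (by omega)
  have hle : ∀ j ≤ m, E.space (l + j) ⊓ bperp B (C.space j) ≤ E.space l := fun j hj => calc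
    E.space (l + j) ⊓ bperp B (C.space j)
      ≤ E.space (l + j) ⊓ D.space (l + 1) := by
        refine le_inf inf_le_left (le_trans (inf_le_inf_right _ ?_) (h.inf_bperp_le j hj))
        rw [add_right_comm]
        exact hDE.le_space_succ (l + j) (by omega)
    _ = E.space l ⊔ D.space 1 ⊓ E.space (l + j) := by
      rw [← hDE.sup_eq (by omega), inf_comm,
        sup_inf_assoc_of_le _ (E.space_le (by omega) (by omega))]
    _ ≤ E.space l := by
      have hbot : D.space 1 ⊓ E.space (l + j) = ⊥ :=
        inf_eq_left_of_finrank_eq_add_one bot_le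
          (by rw [finrank_bot, D.finrank_space (by omega)]) bot_le
          fun hle => hDE.not_le (hle.trans (E.space_le (by omega) le_rfl))
      rw [hbot, sup_bot_eq]
  refine ⟨fun j hj => ?_, fun j hj => ?_⟩
  · rw [add_right_comm]
    exact (hDE.le_space_succ j (by omega)).trans (h.le_space_add (j + 1) (by omega))
  · rcases Nat.lt_succ_iff_lt_or_eq.1 (Nat.lt_succ_of_le hj) with hj | rfl
    · exact hle j (by omega)
    · have hnot : ¬E.space n ≤ bperp B (D.space 1) := fun hED => hDE.not_le (by
        rwa [le_bperp_comm halt, E.bperp_space_self halt hnd hdim] at hED)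
      have hinf : E.space n ⊓ bperp B (D.space 1) = E.space (l + m) :=
        inf_eq_left_of_finrank_eq_add_one (E.space_le (by omega) le_rfl)
          (by rw [E.finrank_space le_rfl, E.finrank_space (by omega)]; omega)
          ((hDE.le_space_succ _ (by omega)).trans (D.space_le_bperp (by omega) (by omega))) hnot
      have hl : l + (m + 1) = n := by omega
      rw [hl]
      refine le_trans (le_inf ?_ ?_) (hle m le_rfl)
      · exact hinf ▸ inf_le_inf_left _ (bperp_anti hDC)
      · exact inf_le_right.trans (bperp_anti (C.space_le m.le_succ (by omega)))

theorem Chamber.exists_space_succ_eq_sup (halt : IsAltForm B) (E : Chamber B n)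
    {p : Submodule F V} (hp : finrank F p = 1) (hperp : p ≤ bperp B (E.space (n - 1)))
    (hpE : ¬p ≤ E.space (n - 1)) :
    ∃ D : Chamber B n, ∀ j < n, D.space (j + 1) = E.space j ⊔ p := by
  have hmono : ∀ j < n, E.space j ≤ E.space (n - 1) := fun j hj =>
    E.space_le (by omega) (n.sub_le 1)
  have hfinrank : ∀ j < n, finrank F ↥(E.space j ⊔ p) = j + 1 := fun j hj => by
    have hbot : p ⊓ E.space j = ⊥ :=
      inf_eq_left_of_finrank_eq_add_one bot_le (by rw [finrank_bot, hp]) bot_le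
        fun hle => hpE (hle.trans (hmono j hj))
    have := Submodule.finrank_sup_add_finrank_inf_eq (E.space j) p
    rw [inf_comm, hbot, finrank_bot, hp, E.finrank_space hj.le] at this
    exact this
  have hiso : ∀ j < n, IsTotIso B (E.space j ⊔ p) := fun j hj =>
    (E.isTotIso_space (mem_insert_zero_Icc hj.le)).of_finrank_eq_add_one halt le_sup_left
      (sup_le (E.space_le_bperp hj.le hj.le) (hperp.trans (bperp_anti (hmono j hj))))
      (by rw [hfinrank j hj, E.finrank_space hj.le])
  have hpred : ∀ j ∈ Finset.Icc 1 n, j - 1 < n := fun j hj => by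
    have := Finset.mem_Icc.1 hj
    omega
  let D : Chamber B n :=
    { space := fun j => if j ∈ Finset.Icc 1 n then E.space (j - 1) ⊔ p else ⊥
      isotropic := fun j hj => by
        rw [if_pos hj]
        exact hiso _ (hpred j hj)
      finrank_eq := fun j hj => by
        rw [if_pos hj, hfinrank _ (hpred j hj)]
        exact Nat.sub_add_cancel (Finset.mem_Icc.1 hj).1
      mono := fun j hj k hk hjk => by
        rw [if_pos hj, if_pos hk]
        exact sup_le_sup_right (E.space_le (Nat.sub_le_sub_right hjk 1) (hpred k hk).le) p
      eq_bot := fun j hj => if_neg hj }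
  exact ⟨D, fun j hj => if_pos (succ_mem_Icc hj)⟩

theorem CoxeterPowRel.finrank_inf_bperp (halt : IsAltForm B) (hnd : NondegForm B)
    {m l : ℕ} (hml : m + 1 + l = n) {C E : Chamber B n} (h : CoxeterPowRel (m + 1) l C E) :
    finrank F ↥(bperp B (E.space (n - 1)) ⊓ C.space (m + 1)) = 1 := by
  have hn : l + (m + 1) = n := by omega
  have hinf : bperp B (C.space (m + 1)) ⊓ E.space (n - 1) = E.space l := by
    refine le_antisymm ?_ (le_inf ?_ (E.space_le (by omega) (n.sub_le 1)))
    · refine le_trans ?_ (h.inf_bperp_le (m + 1) le_rfl)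
      rw [inf_comm, hn]
      exact inf_le_inf_right _ (E.space_le (n.sub_le 1) le_rfl)
    · exact (h.le_space_add l le_rfl).trans (C.space_le_bperp hml.le (by omega))
  have := finrank_bperp_inf_add_finrank halt hnd (E.space (n - 1)) (C.space (m + 1))
  rw [hinf, E.finrank_space (by omega), E.finrank_space (by omega), C.finrank_space (by omega)]
    at this
  omega

theorem CoxeterPowRel.inf_eq_bot (halt : IsAltForm B) (hnd : NondegForm B)
    (hdim : finrank F V = 2 * n) {m l : ℕ} (hml : m + l = n) {C E : Chamber B n}
    (h : CoxeterPowRel m l C E) : E.space n ⊓ C.space m = ⊥ := by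
  have hn : l + m = n := by omega
  have hinf : bperp B (C.space m) ⊓ E.space n = E.space l := by
    refine le_antisymm ?_ (le_inf ?_ (E.space_le (by omega) le_rfl))
    · have hle := h.inf_bperp_le m le_rfl
      rwa [hn, inf_comm] at hle
    · exact (h.le_space_add l le_rfl).trans (C.space_le_bperp hml.le (by omega))
  have := finrank_bperp_inf_add_finrank halt hnd (E.space n) (C.space m)
  rw [hinf, E.bperp_space_self halt hnd hdim, E.finrank_space le_rfl, E.finrank_space (by omega),
    C.finrank_space (by omega)] at this
  exact Submodule.finrank_eq_zero.1 (by omega)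

-- The entry of dimension `1` of `D` has to be `p` below, and it determines the other entries.
theorem CoxeterPowRel.existsUnique_pred (halt : IsAltForm B) (hnd : NondegForm B)
    (hdim : finrank F V = 2 * n) {m l : ℕ} (hml : m + 1 + l = n) {C E : Chamber B n}
    (h : CoxeterPowRel (m + 1) l C E) :
    ∃! D : Chamber B n, CoxeterPowRel m (l + 1) C D ∧ CoxeterRel n D E := by
  set p := bperp B (E.space (n - 1)) ⊓ C.space (m + 1)
  have hfinrank : finrank F p = 1 := h.finrank_inf_bperp halt hnd hml
  have hpE : ¬p ≤ E.space n := fun hle => by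
    have hbot : p ≤ ⊥ := h.inf_eq_bot halt hnd hdim hml ▸ le_inf hle inf_le_right
    rw [le_bot_iff.1 hbot, finrank_bot] at hfinrank
    exact zero_ne_one hfinrank
  obtain ⟨D, hD⟩ := E.exists_space_succ_eq_sup halt hfinrank inf_le_left
    fun hle => hpE (hle.trans (E.space_le (n.sub_le 1) le_rfl))
  have hD₁ : D.space 1 = p := (hD 0 (by omega)).trans (by rw [E.space_zero, bot_sup_eq])
  refine ⟨D, ⟨⟨fun j hj => ?_, fun j hj => ?_⟩, fun j hj => ?_, fun j hj => ?_, ?_⟩, ?_⟩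
  · rcases j with _ | j
    · exact D.space_zero ▸ bot_le
    · rw [hD j (by omega), ← add_assoc, add_right_comm]
      exact sup_le (h.le_space_add j (by omega))
        (inf_le_right.trans (C.space_le (by omega) (by omega)))
  · have hpC : p ≤ bperp B (C.space j) :=
      inf_le_right.trans (C.space_le_bperp (by omega) (by omega))
    rw [add_right_comm, hD _ (by omega), hD _ (by omega), sup_comm, sup_inf_assoc_of_le _ hpC,
      sup_comm]
    exact sup_le_sup_right (h.inf_bperp_le j (by omega)) p
  · exact hD j hj ▸ le_sup_left
  · rw [D.eq_bot j (by simp [hj]), E.eq_bot j (by simp [hj])]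
  · rwa [hD₁]
  · rintro D' ⟨hCD', hD'E⟩
    have hD'p : D'.space 1 ≤ p := by
      refine le_inf ((D'.space_le_bperp (by omega) le_rfl).trans (bperp_anti ?_))
        (hCD'.le_space_add 1 (by omega))
      have hle := hD'E.le_space_succ (n - 1) (by omega)
      rwa [Nat.sub_add_cancel (by omega)] at hle
    have hD'₁ : D'.space 1 = p :=
      Submodule.eq_of_le_of_finrank_eq hD'p (by rw [hfinrank, D'.finrank_space (by omega)])
    exact Chamber.ext_space_succ fun j hj => by rw [hD j hj, ← hD'E.sup_eq hj, hD'₁]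

variable [Finite F]

theorem relMat_coxeterRel (halt : IsAltForm B) (hn : 0 < n) {i : ℕ} (hi : i ≤ n) :
    relMat (CoxeterRel i) = coxeterProd (panelMat B n) i := by
  induction i with
  | zero =>
    have hrel : CoxeterRel (B := B) (n := n) 0 = fun C D => C = D :=
      funext₂ fun _ _ => propext (coxeterRel_zero hn)
    rw [hrel, relMat_eq, coxeterProd_zero]
  | succ i ih =>
    rw [coxeterProd_succ, ← ih (by omega)]
    exact (relMat_mul (fun C D E hCD hDE => hCD.succ hi hDE.1 hDE.2)
      fun C E h => h.existsUnique_pred halt hi).symm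

theorem relMat_coxeterPowRel (halt : IsAltForm B) (hnd : NondegForm B)
    (hdim : finrank F V = 2 * n) {m l : ℕ} (hml : m + l = n) :
    relMat (CoxeterPowRel m l) = coxeterProd (panelMat B n) n ^ m := by
  induction m generalizing l with
  | zero =>
    obtain rfl : l = n := by omega
    have hrel : CoxeterPowRel (B := B) (n := l) 0 l = fun C D => C = D :=
      funext₂ fun _ _ => propext coxeterPowRel_zero
    rw [hrel, relMat_eq, pow_zero]
  | succ m ih =>
    rw [pow_succ, ← ih (l := l + 1) (by omega), ← relMat_coxeterRel halt (by omega) le_rfl]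
    exact (relMat_mul (fun C D E hCD hDE => hCD.comp halt hnd hdim (by omega) hDE)
      fun C E h => h.existsUnique_pred halt hnd hdim hml).symm

theorem oppMat_eq_coxeterProd_pow (halt : IsAltForm B) (hnd : NondegForm B)
    (hdim : finrank F V = 2 * n) :
    oppMat B (Finset.Icc 1 n) = coxeterProd (panelMat B n) n ^ n := by
  have hrel : CoxeterPowRel (B := B) (n := n) n 0 = FlagOpp :=
    funext₂ fun _ _ => propext coxeterPowRel_self_zero
  rw [oppMat, ← hrel, relMat_coxeterPowRel halt hnd hdim (add_zero n)]

theorem ratioBounded_oppMat_chambers (halt : IsAltForm B) (hnd : NondegForm B)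
    (hdim : finrank F V = 2 * n) :
    ∃ k, RatioBounded (oppMat B (Finset.Icc 1 n)) k ((Nat.card F : ℝ) ^ n) := by
  have hq : (1 : ℝ) ≤ Nat.card F := Nat.one_le_cast.2 Nat.card_pos
  refine ⟨_, oppMat_eq_coxeterProd_pow halt hnd hdim ▸
    ratioBounded_coxeterProd_pow hq (fun i hi => ?_) (fun i hi => ?_) fun i => ?_⟩
  · exact relMat_mulVec_one fun C => ncard_ne_and_erase_eq halt hnd hdim hi C
  · exact relMat_ne_sub_mul_add_one (r := fun C C' => C.erase (i + 1) = C'.erase (i + 1))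
      ⟨fun _ => rfl, Eq.symm, Eq.trans⟩ fun C => ncard_ne_and_erase_eq halt hnd hdim hi C
  · rw [← oppMat_eq_coxeterProd_pow halt hnd hdim]
    by_cases hi : i < n
    · exact commute_oppMat_panelMat halt hnd hdim hi
    · have hzero : panelMat B n i = 0 := by
        ext C C'
        refine if_neg fun ⟨hne, h⟩ => hne (SFlag.ext_space fun j hj => ?_)
        have := Finset.mem_Icc.1 hj
        exact (SFlag.erase_eq_erase_iff.1 h j (by omega)).symm
      rw [hzero]
      exact Commute.zero_right _

end CoxeterElement

theorem stmt_11_general {F V : Type} [Field F] [Finite F] [AddCommGroup V] [Module F V]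
    [FiniteDimensional F V] (n : ℕ) (B : V →ₗ[F] V →ₗ[F] F) (halt : IsAltForm B)
    (hnd : NondegForm B) (hdim : finrank F V = 2 * n) (J : Finset ℕ) (hJ : J ⊆ Finset.Icc 1 n)
    [hfintype : Fintype (SFlag B J)] (A : Matrix (SFlag B J) (SFlag B J) ℝ)
    (hA : ∀ C C' : SFlag B J, A C C' = if FlagOpp C C' then 1 else 0) (lam : ℝ)
    (hlam : ∃ x : SFlag B J → ℝ, x ≠ 0 ∧ A *ᵥ x = lam • x)
    (hmin : ∀ mu : ℝ, (∃ x : SFlag B J → ℝ, x ≠ 0 ∧ A *ᵥ x = mu • x) → lam ≤ mu)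
    (𝓕 : Set (SFlag B J)) (hEKR : IsEKRFlags 𝓕)
    (hsharp : (𝓕.ncard : ℝ) = Nat.card (SFlag B J) / ((Nat.card F : ℝ) ^ n + 1))
    (Fl : SFlag B J) :
    -lam * (if Fl ∈ 𝓕 then 1 else 0) + ({G ∈ 𝓕 | FlagOpp G Fl}.ncard : ℝ) = -lam := by
  obtain rfl : A = oppMat B J := Matrix.ext hA
  obtain rfl : hfintype = SFlag.instFintype := Subsingleton.elim _ _
  obtain ⟨k, hk⟩ := exists_ratioBounded_oppMat_of_chambers halt hnd hdim
    (ratioBounded_oppMat_chambers halt hnd hdim) hJ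
  refine hk.neg_mul_indicator_add_ncard (fun _ _ h => h.symm halt hnd) (by positivity) hlam hmin
    hEKR ?_ Fl
  rw [hsharp]
  exact div_mul_cancel₀ _ (by positivity)

/-- if `𝓕` is a ratio-sharp EKR-set of flags of type `J` and `λ_J`
is the smallest eigenvalue of the opposition graph `Γ_J`, then for every flag `F`,
`(-λ_J)·𝟙_𝓕(F) + #{G ∈ 𝓕 : G opposite F} = -λ_J`. -/
theorem stmt_11 {F V : Type} [Field F] [Fintype F] [AddCommGroup V] [Module F V]
    [FiniteDimensional F V] (n q : ℕ) (hn : 3 ≤ n) (hq : Fintype.card F = q)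
    (B : V →ₗ[F] V →ₗ[F] F) (halt : IsAltForm B) (hnd : NondegForm B)
    (hdim : Module.finrank F V = 2 * n)
    (J : Finset ℕ) (hJ : J ⊆ Finset.Icc 1 n) (hJne : J.Nonempty)
    [Fintype (SFlag B J)] [DecidableEq (SFlag B J)]
    (A : Matrix (SFlag B J) (SFlag B J) ℝ)
    (hA : ∀ C C' : SFlag B J, A C C' = if FlagOpp C C' then 1 else 0)
    (lam : ℝ)
    (hlam : ∃ x : SFlag B J → ℝ, x ≠ 0 ∧ A.mulVec x = lam • x)
    (hmin : ∀ mu : ℝ, (∃ x : SFlag B J → ℝ, x ≠ 0 ∧ A.mulVec x = mu • x) → lam ≤ mu)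
    (𝓕 : Set (SFlag B J)) (hEKR : IsEKRFlags 𝓕)
    (hsharp : (𝓕.ncard : ℝ) = (Nat.card (SFlag B J) : ℝ) / ((q : ℝ) ^ n + 1)) :
    ∀ Fl : SFlag B J,
      (-lam) * (if Fl ∈ 𝓕 then 1 else 0) + ({G ∈ 𝓕 | FlagOpp G Fl}.ncard : ℝ) =
        -lam := by
  rw [← hq, ← Nat.card_eq_fintype_card] at hsharp
  exact stmt_11_general n B halt hnd hdim J hJ A hA lam hlam hmin 𝓕 hEKR hsharp
end

section
/- Let 1 ≤ s ≤ n−1, let P be a point (a totally isotropic 1-space) and let S and T be totally isotropic s-spaces of the symplectic polar space of rank n with P ⊄ S, P ⊄ T, S ⊆ P^⊥ and T ⊆ P^⊥. Then S^⊥ ∩ T = {0} if and only if (P + S)^⊥ ∩ (P + T) = P. -/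
open scoped Classical

open Module

/-!
If `P ≤ P^⊥`, `P ≤ S^⊥` and `T ≤ P^⊥`, then `P ⊔ T ≤ P^⊥`, so the factor `P^⊥` of
`(P ⊔ S)^⊥ = P^⊥ ⊓ S^⊥` is absorbed and the modular law gives
`(P ⊔ S)^⊥ ⊓ (P ⊔ T) = S^⊥ ⊓ (P ⊔ T) = P ⊔ (S^⊥ ⊓ T)`.
Since `P` meets `T` trivially, this equals `P` exactly when `S^⊥ ⊓ T = ⊥`.
-/

section OrthogonalBilin

variable {R R₁ M M₁ : Type*} [CommSemiring R] [AddCommMonoid M] [Module R M]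

theorem orthogonalBilin_sup {R₂ M₂ : Type*} [CommSemiring R₁] [AddCommMonoid M₁] [Module R₁ M₁]
    [CommSemiring R₂] [AddCommMonoid M₂] [Module R₂ M₂] {I₁ : R₁ →+* R} {I₂ : R₂ →+* R}
    (B : M₁ →ₛₗ[I₁] M₂ →ₛₗ[I₂] M) (S T : Submodule R₁ M₁) :
    (S ⊔ T).orthogonalBilin B = S.orthogonalBilin B ⊓ T.orthogonalBilin B := by
  refine le_antisymm (le_inf (Submodule.orthogonalBilin_le le_sup_left)
    (Submodule.orthogonalBilin_le le_sup_right)) ?_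
  rintro x ⟨hxS, hxT⟩ y hy
  obtain ⟨s, hs, t, ht, rfl⟩ := Submodule.mem_sup.1 hy
  rw [map_add, LinearMap.add_apply, hxS s hs, hxT t ht, add_zero]

theorem le_orthogonalBilin_comm [CommSemiring R₁] [AddCommMonoid M₁] [Module R₁ M₁]
    {I₁ I₂ : R₁ →+* R} {B : M₁ →ₛₗ[I₁] M₁ →ₛₗ[I₂] M} (hB : B.IsRefl) {S T : Submodule R₁ M₁} :
    S ≤ T.orthogonalBilin B ↔ T ≤ S.orthogonalBilin B :=
  ⟨fun h t ht s hs ↦ hB t s (h hs t ht), fun h s hs t ht ↦ hB s t (h ht s hs)⟩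

variable [CommRing R₁] [AddCommGroup M₁] [Module R₁ M₁] {I₁ I₂ : R₁ →+* R}
  {B : M₁ →ₛₗ[I₁] M₁ →ₛₗ[I₂] M} {P S T : Submodule R₁ M₁}

theorem orthogonalBilin_sup_inf_sup (hP : P ≤ P.orthogonalBilin B)
    (hPS : P ≤ S.orthogonalBilin B) (hTP : T ≤ P.orthogonalBilin B) :
    (P ⊔ S).orthogonalBilin B ⊓ (P ⊔ T) = P ⊔ S.orthogonalBilin B ⊓ T :=
  calc (P ⊔ S).orthogonalBilin B ⊓ (P ⊔ T)
    _ = S.orthogonalBilin B ⊓ (P.orthogonalBilin B ⊓ (P ⊔ T)) := by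
      rw [orthogonalBilin_sup, inf_left_comm, inf_assoc]
    _ = (P ⊔ T) ⊓ S.orthogonalBilin B := by
      rw [inf_eq_right.2 (sup_le hP hTP), inf_comm]
    _ = P ⊔ S.orthogonalBilin B ⊓ T := by
      rw [sup_inf_assoc_of_le T hPS, inf_comm]

theorem stmt_18_general (hP : P ≤ P.orthogonalBilin B) (hPS : P ≤ S.orthogonalBilin B)
    (hTP : T ≤ P.orthogonalBilin B) (hPT : Disjoint P T) :
    S.orthogonalBilin B ⊓ T = ⊥ ↔ (P ⊔ S).orthogonalBilin B ⊓ (P ⊔ T) = P := by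
  have h_disj : Disjoint P (S.orthogonalBilin B ⊓ T) := hPT.mono_right inf_le_right
  rw [orthogonalBilin_sup_inf_sup hP hPS hTP, sup_eq_left]
  exact ⟨fun h ↦ h.le.trans bot_le, h_disj.eq_bot_of_ge⟩

end OrthogonalBilin

section TotallyIsotropic

variable {F V : Type} [Field F] [AddCommGroup V] [Module F V]

theorem bperp_eq_orthogonalBilin (B : V →ₗ[F] V →ₗ[F] F) (W : Submodule F V) :
    bperp B W = W.orthogonalBilin B := by
  ext x
  simp only [bperp, Submodule.mem_iInf, LinearMap.mem_ker, Submodule.mem_orthogonalBilin_iff]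

theorem IsTotIso.le_orthogonalBilin {B : V →ₗ[F] V →ₗ[F] F} {W : Submodule F V}
    (hW : IsTotIso B W) : W ≤ W.orthogonalBilin B :=
  fun w hw u hu ↦ hW u hu w hw

end TotallyIsotropic

/-- for a point `P` and totally isotropic `s`-spaces `S, T ⊆ P^⊥` not
containing `P`, `S` and `T` are opposite iff `(P+S)^⊥ ∩ (P+T) = P`. -/
theorem stmt_18 {F V : Type} [Field F] [Fintype F] [AddCommGroup V] [Module F V]
    [FiniteDimensional F V] (n q : ℕ) (hn : 3 ≤ n) (hq : Fintype.card F = q)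
    (B : V →ₗ[F] V →ₗ[F] F) (halt : IsAltForm B) (hnd : NondegForm B)
    (hdim : Module.finrank F V = 2 * n)
    (s : ℕ) (hs1 : 1 ≤ s) (hsn : s ≤ n - 1)
    (P : Submodule F V) (hPiso : IsTotIso B P) (hPrank : Module.finrank F P = 1)
    (S : Submodule F V) (hSiso : IsTotIso B S) (hSrank : Module.finrank F S = s)
    (T : Submodule F V) (hTiso : IsTotIso B T) (hTrank : Module.finrank F T = s)
    (hPS : ¬ P ≤ S) (hPT : ¬ P ≤ T)
    (hSperp : S ≤ bperp B P) (hTperp : T ≤ bperp B P) :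
    bperp B S ⊓ T = ⊥ ↔ bperp B (P ⊔ S) ⊓ (P ⊔ T) = P := by
  simp only [bperp_eq_orthogonalBilin] at hSperp hTperp ⊢
  exact stmt_18_general hPiso.le_orthogonalBilin
    ((le_orthogonalBilin_comm (LinearMap.IsAlt.isRefl halt)).1 hSperp) hTperp
    ((Submodule.isAtom_iff_finrank_eq_one.2 hPrank).not_le_iff_disjoint.1 hPT)
end
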